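/- arXiv:0907.4470 — 9 statements merged into one kernel-verified Lean document; each statement's English description precedes it below -/
import Mathlib

section
/- Let t : V → V be a linear map admitting an adjoint t*, and let p₁,…,p_m, q, v₂,…,v_m ∈ V with ⟨p_a, q⟩ = 0 for all a = 1,…,m. Then ⟨D_t(p₁∧⋯∧p_m), q∧v₂∧⋯∧v_m⟩ = ⟨p₁∧⋯∧p_m, t*q∧v₂∧⋯∧v_m⟩, where both pairings are taken in the induced hermitian form on ⋀^m V. -/
/-- The wedge `v 0 ∧ ⋯ ∧ v (m-1)` as an element of the `m`-th exterior power `⋀[R]^m V`. -/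
noncomputable def wedge (R : Type*) [CommRing R] {V : Type*} [AddCommGroup V] [Module R V]
    (m : ℕ) (v : Fin m → V) : ⋀[R]^m V :=
  ⟨ExteriorAlgebra.ιMulti R m v,
    ExteriorAlgebra.ιMulti_range R m (Set.mem_range_self v)⟩

/-!
Replace the factors of `p₁ ∧ ⋯ ∧ pₘ` one at a time by their images under `t`, and pair with `w`.
Each replacement changes one row of the matrix `⟨pₐ, w_b⟩`, whose column `j` vanishes when `w j` is
orthogonal to every `pₐ`. Expanding along the new row, only its entry in column `j` survives, since
every other minor retains a zero column. The sum over all rows is therefore the expansion along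
column `j` of the determinant with that column replaced by `⟨t pₐ, w j⟩ = ⟨pₐ, t* (w j)⟩`.
-/

section Determinant

open Matrix

variable {n R : Type*} [Fintype n] [DecidableEq n] [CommRing R]

theorem adjugate_apply_eq_zero_of_column_eq_zero {A : Matrix n n R} {j k : n}
    (hA : ∀ i, A i j = 0) (hkj : k ≠ j) (i : n) : A.adjugate k i = 0 := by
  rw [adjugate_apply]
  refine det_eq_zero_of_column_eq_zero j fun a => ?_
  simp [updateRow_apply, hA, hkj.symm]

theorem det_updateRow_eq_sum_adjugate_mul (A : Matrix n n R) (i : n) (r : n → R) :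
    (A.updateRow i r).det = ∑ k, A.adjugate k i * r k := by
  rw [← cramer_transpose_apply, cramer_eq_adjugate_mulVec, ← adjugate_transpose]
  rfl

theorem det_updateCol_eq_sum_adjugate_mul (A : Matrix n n R) (j : n) (c : n → R) :
    (A.updateCol j c).det = ∑ i, A.adjugate j i * c i := by
  rw [← cramer_apply, cramer_eq_adjugate_mulVec]
  rfl

theorem sum_det_updateRow_of_column_eq_zero {A : Matrix n n R} {j : n} (hA : ∀ i, A i j = 0)
    (B : Matrix n n R) :
    ∑ i, (A.updateRow i (B i)).det = (A.updateCol j fun i => B i j).det := by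
  rw [det_updateCol_eq_sum_adjugate_mul]
  refine Finset.sum_congr rfl fun i _ => ?_
  rw [det_updateRow_eq_sum_adjugate_mul]
  refine Fintype.sum_eq_single j fun k hkj => ?_
  rw [adjugate_apply_eq_zero_of_column_eq_zero hA hkj, zero_mul]

end Determinant

section PairingMatrix

variable {m n α β γ : Type*} (f : α → β → γ) (v : m → α) (w : n → β)

theorem of_update_left_eq_updateRow [DecidableEq m] (i : m) (x : α) :
    Matrix.of (fun a b => f (Function.update v i x a) (w b)) =
      (Matrix.of fun a b => f (v a) (w b)).updateRow i fun b => f x (w b) := by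
  ext a b
  obtain rfl | hai := eq_or_ne a i <;> simp [*]

theorem of_update_right_eq_updateCol [DecidableEq n] (j : n) (y : β) :
    Matrix.of (fun a b => f (v a) (Function.update w j y b)) =
      (Matrix.of fun a b => f (v a) (w b)).updateCol j fun a => f (v a) y := by
  ext a b
  obtain rfl | hbj := eq_or_ne b j <;> simp [*]

end PairingMatrix

theorem statement3_general {R V : Type*} [CommRing R] [AddCommGroup V] [Module R V]
    {σ : R →+* R} (φ : V →ₗ[R] V →ₛₗ[σ] R) {m : ℕ}
    (Φ : ⋀[R]^m V →ₗ[R] ⋀[R]^m V →ₛₗ[σ] R)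
    (hΦ : ∀ v w : Fin m → V,
      Φ (wedge R m v) (wedge R m w) = (Matrix.of fun i j => φ (v i) (w j)).det)
    {t ts : V → V} (hadj : LinearMap.IsAdjointPair φ φ t ts)
    (D : ⋀[R]^m V →ₗ[R] ⋀[R]^m V)
    (hD : ∀ v : Fin m → V,
      D (wedge R m v) = ∑ i, wedge R m (Function.update v i (t (v i))))
    (p w : Fin m → V) (j : Fin m) (horth : ∀ a, φ (p a) (w j) = 0) :
    Φ (D (wedge R m p)) (wedge R m w) =
      Φ (wedge R m p) (wedge R m (Function.update w j (ts (w j)))) := by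
  let A : Matrix (Fin m) (Fin m) R := .of fun a b => φ (p a) (w b)
  let B : Matrix (Fin m) (Fin m) R := .of fun a b => φ (t (p a)) (w b)
  calc
    Φ (D (wedge R m p)) (wedge R m w)
      = ∑ i, Φ (wedge R m (Function.update p i (t (p i)))) (wedge R m w) := by
        rw [hD, map_sum, LinearMap.sum_apply]
    _ = ∑ i, (A.updateRow i (B i)).det := by
        refine Finset.sum_congr rfl fun i _ => ?_
        rw [hΦ, of_update_left_eq_updateRow (fun x y => φ x y)]
        rfl
    _ = (A.updateCol j fun i => B i j).det := sum_det_updateRow_of_column_eq_zero horth B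
    _ = (A.updateCol j fun i => φ (p i) (ts (w j))).det := by
        simp only [B, Matrix.of_apply, hadj _ _]
    _ = Φ (wedge R m p) (wedge R m (Function.update w j (ts (w j)))) := by
        rw [hΦ, of_update_right_eq_updateCol (fun x y => φ x y)]

/-- first identity of Lemma 2.3: for a linear map `t : V → V` with adjoint
`ts`, vectors `p₁,…,p_{m+1}`, `q`, `v₂,…,v_{m+1}` with `⟨p_a, q⟩ = 0` for all `a`, one has
`⟨D_t(p₁∧⋯∧p_{m+1}), q∧v₂∧⋯∧v_{m+1}⟩ = ⟨p₁∧⋯∧p_{m+1}, t*q∧v₂∧⋯∧v_{m+1}⟩`. -/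
theorem statement3 {𝕜 : Type*} [RCLike 𝕜] {V : Type*} [AddCommGroup V] [Module 𝕜 V]
    [FiniteDimensional 𝕜 V]
    (φ : V →ₗ[𝕜] V →ₛₗ[starRingEnd 𝕜] 𝕜)
    (hherm : ∀ x y : V, φ x y = starRingEnd 𝕜 (φ y x))
    (hnd : ∀ x : V, (∀ y : V, φ x y = 0) → x = 0)
    (m : ℕ)
    (Φ : ⋀[𝕜]^(m + 1) V →ₗ[𝕜] ⋀[𝕜]^(m + 1) V →ₛₗ[starRingEnd 𝕜] 𝕜)
    (hΦ : ∀ v w : Fin (m + 1) → V,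
      Φ (wedge 𝕜 (m + 1) v) (wedge 𝕜 (m + 1) w) = (Matrix.of fun i j => φ (v i) (w j)).det)
    (t ts : V →ₗ[𝕜] V)
    (hadj : ∀ v w : V, φ (t v) w = φ v (ts w))
    (D : ⋀[𝕜]^(m + 1) V →ₗ[𝕜] ⋀[𝕜]^(m + 1) V)
    (hD : ∀ v : Fin (m + 1) → V,
      D (wedge 𝕜 (m + 1) v) = ∑ i, wedge 𝕜 (m + 1) (Function.update v i (t (v i))))
    (pv : Fin (m + 1) → V) (q : V) (vv : Fin m → V)
    (horth : ∀ a, φ (pv a) q = 0) :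
    Φ (D (wedge 𝕜 (m + 1) pv)) (wedge 𝕜 (m + 1) (Fin.cons q vv)) =
      Φ (wedge 𝕜 (m + 1) pv) (wedge 𝕜 (m + 1) (Fin.cons (ts q) vv)) := by
  simpa only [Fin.cons_zero, Fin.update_cons_zero] using
    statement3_general φ Φ hΦ hadj D hD pv (Fin.cons q vv) 0 horth
end

section
/- Let t₁, t₂ : V → V be linear maps admitting adjoints t₁*, t₂*, and let p₁,…,p_m, q₁, q₂, v₃,…,v_m ∈ V with ⟨p_a, q₁⟩ = ⟨p_a, q₂⟩ = 0 for all a = 1,…,m. Then ⟨B(t₁,t₂)(p₁∧⋯∧p_m), q₁∧q₂∧v₃∧⋯∧v_m⟩ = ⟨p₁∧⋯∧p_m, t₁*q₁∧t₂*q₂∧v₃∧⋯∧v_m⟩ + ⟨p₁∧⋯∧p_m, t₂*q₁∧t₁*q₂∧v₃∧⋯∧v_m⟩, where the pairings are taken in the induced hermitian form on ⋀^m V. -/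
/-! The adjoint of `B(t₁, t₂)` on the exterior power is `B(t₁*, t₂*)`: with the matrices
`M = (⟨pᵢ, wⱼ⟩)`, `X = (⟨t₁ pᵢ, wⱼ⟩) = (⟨pᵢ, t₁* wⱼ⟩)` and `Y = (⟨t₂ pᵢ, wⱼ⟩) = (⟨pᵢ, t₂* wⱼ⟩)`,
both pairings are the coefficient of `x y` in `det (M + x X + y Y)`, computed by rows or by columns.
Moving `B(t₁, t₂)` across therefore gives a sum of determinants in which two of the columns
`q₁, q₂, v₃, …` have been replaced. Unless these two are `q₁` and `q₂`, a zero column remains. -/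

section GramMatrix

open Matrix

variable {R V W n : Type*}

/-- The Gram matrix `(φ (v i) (w j))` of two families under a pairing `φ`. The pairing is an
arbitrary function, which covers bilinear and sesquilinear forms alike. -/
def gramMatrix (φ : V → W → R) (v : n → V) (w : n → W) : Matrix n n R :=
  of fun i j => φ (v i) (w j)

variable [DecidableEq n]

lemma gramMatrix_update_left (φ : V → W → R) (v : n → V) (w : n → W) (i : n) (x : V) :
    gramMatrix φ (Function.update v i x) w =
      (gramMatrix φ v w).updateRow i fun j => φ x (w j) := by
  ext a b
  by_cases h : a = i <;> simp [gramMatrix, updateRow_apply, h]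

lemma gramMatrix_update_right (φ : V → W → R) (v : n → V) (w : n → W) (j : n) (y : W) :
    gramMatrix φ v (Function.update w j y) =
      (gramMatrix φ v w).updateCol j fun i => φ (v i) y := by
  ext a b
  by_cases h : b = j <;> simp [gramMatrix, h]

variable [CommRing R] [Fintype n]

theorem sum_det_updateRow_updateRow_eq_updateCol_updateCol (M X Y : Matrix n n R) :
    ∑ i, ∑ j, (if i = j then 0 else ((M.updateRow i (X.row i)).updateRow j (Y.row j)).det) =
      ∑ k, ∑ l, if k = l then 0 else ((M.updateCol k (X.col k)).updateCol l (Y.col l)).det := by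
  have prod_eq (σ : Equiv.Perm n) (k l : n) :
      ∏ a, ((M.updateRow (σ k) (X.row (σ k))).updateRow (σ l) (Y.row (σ l))) (σ a) a =
        ∏ a, ((M.updateCol k (X.col k)).updateCol l (Y.col l)) (σ a) a := by
    refine Finset.prod_congr rfl fun a _ => ?_
    simp only [updateRow_apply, updateCol_apply, row_apply, col_apply, σ.injective.eq_iff]
    split_ifs <;> simp_all only
  have det_ite (P : Prop) [Decidable P] (N : Matrix n n R) :
      (if P then 0 else N.det) =
        ∑ σ : Equiv.Perm n, if P then 0 else (σ.sign : R) * ∏ a, N (σ a) a := by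
    split_ifs <;> simp [det_apply']
  rw [← Fintype.sum_prod_type', ← Fintype.sum_prod_type']
  simp only [det_ite]
  rw [Finset.sum_comm, Finset.sum_comm (s := Finset.univ (α := n × n))]
  refine Finset.sum_congr rfl fun σ _ => (Fintype.sum_equiv (σ.prodCongr σ) _ _ ?_).symm
  rintro ⟨k, l⟩
  simp [prod_eq]

theorem sum_det_gramMatrix_update_left_eq_right (φ : V → W → R) {t₁ t₂ : V → V} {s₁ s₂ : W → W}
    (h₁ : ∀ x y, φ (t₁ x) y = φ x (s₁ y)) (h₂ : ∀ x y, φ (t₂ x) y = φ x (s₂ y))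
    (v : n → V) (w : n → W) :
    ∑ i, ∑ j, (if i = j then 0 else (gramMatrix φ
        (Function.update (Function.update v i (t₁ (v i))) j (t₂ (v j))) w).det) =
      ∑ k, ∑ l, if k = l then 0 else (gramMatrix φ v
        (Function.update (Function.update w k (s₁ (w k))) l (s₂ (w l)))).det := by
  simp only [gramMatrix_update_left, gramMatrix_update_right, h₁, h₂]
  exact sum_det_updateRow_updateRow_eq_updateCol_updateCol (gramMatrix φ v w)
    (of fun i j => φ (v i) (s₁ (w j))) (of fun i j => φ (v i) (s₂ (w j)))

theorem sum_det_gramMatrix_update_right_of_orthogonal {φ : V → W → R} {v : n → V} {w : n → W}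
    {c d : n} (hcd : c ≠ d) (hc : ∀ i, φ (v i) (w c) = 0) (hd : ∀ i, φ (v i) (w d) = 0)
    (x y : n → W) :
    ∑ k, ∑ l, (if k = l then 0 else
        (gramMatrix φ v (Function.update (Function.update w k (x k)) l (y l))).det) =
      (gramMatrix φ v (Function.update (Function.update w c (x c)) d (y d))).det +
        (gramMatrix φ v (Function.update (Function.update w c (y c)) d (x d))).det := by
  have det_eq_zero {e k l : n} (he : ∀ i, φ (v i) (w e) = 0) (hk : e ≠ k) (hl : e ≠ l) :
      (gramMatrix φ v (Function.update (Function.update w k (x k)) l (y l))).det = 0 :=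
    det_eq_zero_of_column_eq_zero e fun i => by simpa [gramMatrix, hk, hl] using he i
  rw [← Fintype.sum_prod_type', Fintype.sum_eq_add (c, d) (d, c) (by simp [hcd])]
  · simp [hcd, hcd.symm, Function.update_comm hcd]
  · rintro ⟨k, l⟩ ⟨hkl, hlk⟩
    have missed_or_eq : k = l ∨ (c ≠ k ∧ c ≠ l) ∨ (d ≠ k ∧ d ≠ l) := by grind
    rcases missed_or_eq with rfl | ⟨hk, hl⟩ | ⟨hk, hl⟩
    · simp
    · simp [det_eq_zero hc hk hl]
    · simp [det_eq_zero hd hk hl]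

end GramMatrix

theorem statement4_general {R S : Type*} [CommRing R] [CommRing S] {σ : S →+* R}
    {V W : Type*} [AddCommGroup V] [Module R V] [AddCommGroup W] [Module S W]
    (φ : V →ₗ[R] W →ₛₗ[σ] R) (m : ℕ)
    (Φ : ⋀[R]^(m + 2) V →ₗ[R] ⋀[S]^(m + 2) W →ₛₗ[σ] R)
    (hΦ : ∀ v w, Φ (wedge R (m + 2) v) (wedge S (m + 2) w) =
      (Matrix.of fun i j => φ (v i) (w j)).det)
    (t₁ t₂ : V →ₗ[R] V) (ts₁ ts₂ : W →ₗ[S] W)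
    (hadj₁ : ∀ v w, φ (t₁ v) w = φ v (ts₁ w)) (hadj₂ : ∀ v w, φ (t₂ v) w = φ v (ts₂ w))
    (B : ⋀[R]^(m + 2) V →ₗ[R] ⋀[R]^(m + 2) V)
    (hB : ∀ v : Fin (m + 2) → V, B (wedge R (m + 2) v) = ∑ i, ∑ j, if i = j then 0 else
      wedge R (m + 2) (Function.update (Function.update v i (t₁ (v i))) j (t₂ (v j))))
    (p : Fin (m + 2) → V) (q₁ q₂ : W) (w : Fin m → W)
    (horth₁ : ∀ a, φ (p a) q₁ = 0) (horth₂ : ∀ a, φ (p a) q₂ = 0) :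
    Φ (B (wedge R (m + 2) p)) (wedge S (m + 2) (Fin.cons q₁ (Fin.cons q₂ w))) =
      Φ (wedge R (m + 2) p) (wedge S (m + 2) (Fin.cons (ts₁ q₁) (Fin.cons (ts₂ q₂) w))) +
      Φ (wedge R (m + 2) p) (wedge S (m + 2) (Fin.cons (ts₂ q₁) (Fin.cons (ts₁ q₂) w))) := by
  let u : Fin (m + 2) → W := Fin.cons q₁ (Fin.cons q₂ w)
  have update_u (x y : W) :
      Function.update (Function.update u 0 x) 1 y = Fin.cons x (Fin.cons y w) := by
    rw [Fin.update_cons_zero, ← Fin.succ_zero_eq_one, ← Fin.cons_update, Fin.update_cons_zero]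
  have hΦ' v w : Φ (wedge R (m + 2) v) (wedge S (m + 2) w) =
      (gramMatrix (fun x y => φ x y) v w).det := hΦ v w
  calc Φ (B (wedge R (m + 2) p)) (wedge S (m + 2) u)
      = ∑ i, ∑ j, if i = j then 0 else (gramMatrix (fun x y => φ x y)
          (Function.update (Function.update p i (t₁ (p i))) j (t₂ (p j))) u).det := by
        simp only [hB, map_sum, LinearMap.sum_apply]
        refine Finset.sum_congr rfl fun i _ => Finset.sum_congr rfl fun j _ => ?_
        split_ifs <;> simp [hΦ']
    _ = ∑ k, ∑ l, if k = l then 0 else (gramMatrix (fun x y => φ x y) p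
          (Function.update (Function.update u k (ts₁ (u k))) l (ts₂ (u l)))).det :=
        sum_det_gramMatrix_update_left_eq_right _ hadj₁ hadj₂ p u
    _ = _ := by
        rw [sum_det_gramMatrix_update_right_of_orthogonal zero_ne_one horth₁ horth₂,
          update_u, update_u, hΦ', hΦ']
        rfl

/-- second identity of Lemma 2.3: for linear maps `t₁, t₂ : V → V` with
adjoints `ts₁, ts₂`, vectors `p₁,…,p_{m+2}`, `q₁, q₂`, `v₃,…,v_{m+2}` with
`⟨p_a, q₁⟩ = ⟨p_a, q₂⟩ = 0` for all `a`, one has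
`⟨B(t₁,t₂)(p₁∧⋯∧p_{m+2}), q₁∧q₂∧v₃∧⋯∧v_{m+2}⟩ =
  ⟨p₁∧⋯∧p_{m+2}, t₁*q₁∧t₂*q₂∧v₃∧⋯∧v_{m+2}⟩ + ⟨p₁∧⋯∧p_{m+2}, t₂*q₁∧t₁*q₂∧v₃∧⋯∧v_{m+2}⟩`. -/
theorem statement4 {𝕜 : Type*} [RCLike 𝕜] {V : Type*} [AddCommGroup V] [Module 𝕜 V]
    [FiniteDimensional 𝕜 V]
    (φ : V →ₗ[𝕜] V →ₛₗ[starRingEnd 𝕜] 𝕜)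
    (hherm : ∀ x y : V, φ x y = starRingEnd 𝕜 (φ y x))
    (hnd : ∀ x : V, (∀ y : V, φ x y = 0) → x = 0)
    (m : ℕ)
    (Φ : ⋀[𝕜]^(m + 2) V →ₗ[𝕜] ⋀[𝕜]^(m + 2) V →ₛₗ[starRingEnd 𝕜] 𝕜)
    (hΦ : ∀ v w : Fin (m + 2) → V,
      Φ (wedge 𝕜 (m + 2) v) (wedge 𝕜 (m + 2) w) = (Matrix.of fun i j => φ (v i) (w j)).det)
    (t₁ t₂ ts₁ ts₂ : V →ₗ[𝕜] V)
    (hadj₁ : ∀ v w : V, φ (t₁ v) w = φ v (ts₁ w))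
    (hadj₂ : ∀ v w : V, φ (t₂ v) w = φ v (ts₂ w))
    (B : ⋀[𝕜]^(m + 2) V →ₗ[𝕜] ⋀[𝕜]^(m + 2) V)
    (hB : ∀ v : Fin (m + 2) → V,
      B (wedge 𝕜 (m + 2) v) = ∑ i, ∑ j, if i = j then 0 else
        wedge 𝕜 (m + 2) (Function.update (Function.update v i (t₁ (v i))) j (t₂ (v j))))
    (pv : Fin (m + 2) → V) (q₁ q₂ : V) (vv : Fin m → V)
    (horth₁ : ∀ a, φ (pv a) q₁ = 0) (horth₂ : ∀ a, φ (pv a) q₂ = 0) :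
    Φ (B (wedge 𝕜 (m + 2) pv)) (wedge 𝕜 (m + 2) (Fin.cons q₁ (Fin.cons q₂ vv))) =
      Φ (wedge 𝕜 (m + 2) pv) (wedge 𝕜 (m + 2) (Fin.cons (ts₁ q₁) (Fin.cons (ts₂ q₂) vv))) +
      Φ (wedge 𝕜 (m + 2) pv) (wedge 𝕜 (m + 2) (Fin.cons (ts₂ q₁) (Fin.cons (ts₁ q₂) vv))) :=
  statement4_general φ m Φ hΦ t₁ t₂ ts₁ ts₂ hadj₁ hadj₂ B hB pv q₁ q₂ vv horth₁ horth₂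
end

section
/- For all linear maps t, s : V → V and all m, the composite of the derivations D_t and D_s on the m-th exterior power satisfies D_t ∘ D_s = B(t,s) + D_{t∘s} as linear endomorphisms of ⋀^m V. -/
theorem linearMap_ext_wedge {R : Type*} [CommRing R] {V N : Type*} [AddCommGroup V] [Module R V]
    [AddCommGroup N] [Module R N] {m : ℕ} {f g : ⋀[R]^m V →ₗ[R] N}
    (h : ∀ v : Fin m → V, f (wedge R m v) = g (wedge R m v)) : f = g :=
  exteriorPower.linearMap_ext (AlternatingMap.ext h)

theorem sum_sum_update_update_eq_offDiag_add_diag {ι : Type*} [Fintype ι] [DecidableEq ι]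
    {α : ι → Type*} {N : Type*} [AddCommMonoid N] (f : (∀ i, α i) → N) (t s : ∀ i, α i → α i)
    (v : ∀ i, α i) :
    ∑ j, ∑ i, f (Function.update (Function.update v j (s j (v j))) i
        (t i (Function.update v j (s j (v j)) i))) =
      (∑ i, ∑ j, if i = j then 0 else
        f (Function.update (Function.update v i (t i (v i))) j (s j (v j)))) +
      ∑ i, f (Function.update v i (t i (s i (v i)))) := by
  have diag_eq_sum (i : ι) : f (Function.update v i (t i (s i (v i)))) =
      ∑ j, if i = j then f (Function.update v i (t i (s i (v i)))) else 0 := by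
    rw [Fintype.sum_ite_eq]
  rw [Finset.sum_comm, ← Finset.sum_add_distrib]
  refine Finset.sum_congr rfl fun i _ => ?_
  rw [diag_eq_sum, ← Finset.sum_add_distrib]
  refine Finset.sum_congr rfl fun j _ => ?_
  obtain rfl | hij := eq_or_ne i j
  · rw [if_pos rfl, if_pos rfl, zero_add, Function.update_self, Function.update_idem]
  · rw [if_neg hij, if_neg hij, add_zero, Function.update_of_ne hij, Function.update_comm hij]

theorem statement7_general {R : Type*} [CommRing R] {V : Type*} [AddCommGroup V] [Module R V]
    (m : ℕ) (t s : V →ₗ[R] V)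
    (Dt Ds Dts Bts : ⋀[R]^m V →ₗ[R] ⋀[R]^m V)
    (hDt : ∀ v : Fin m → V,
      Dt (wedge R m v) = ∑ i, wedge R m (Function.update v i (t (v i))))
    (hDs : ∀ v : Fin m → V,
      Ds (wedge R m v) = ∑ i, wedge R m (Function.update v i (s (v i))))
    (hDts : ∀ v : Fin m → V,
      Dts (wedge R m v) = ∑ i, wedge R m (Function.update v i (t (s (v i)))))
    (hBts : ∀ v : Fin m → V,
      Bts (wedge R m v) = ∑ i, ∑ j, if i = j then 0 else
        wedge R m (Function.update (Function.update v i (t (v i))) j (s (v j)))) :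
    Dt ∘ₗ Ds = Bts + Dts := by
  refine linearMap_ext_wedge fun v => ?_
  calc
    Dt (Ds (wedge R m v))
    _ = ∑ j, ∑ i, wedge R m (Function.update (Function.update v j (s (v j))) i
          (t (Function.update v j (s (v j)) i))) := by simp only [hDs, map_sum, hDt]
    _ = Bts (wedge R m v) + Dts (wedge R m v) := by
      rw [hBts, hDts]
      exact sum_sum_update_update_eq_offDiag_add_diag (wedge R m) (fun _ => t) (fun _ => s) v

/-- for all linear maps `t, s : V → V` and all `m`, the derivations on the
`m`-th exterior power satisfy `D_t ∘ D_s = B(t,s) + D_{t∘s}`. -/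
theorem statement7 {K : Type*} [Field K] {V : Type*} [AddCommGroup V] [Module K V]
    (m : ℕ) (t s : V →ₗ[K] V)
    (Dt Ds Dts Bts : ⋀[K]^m V →ₗ[K] ⋀[K]^m V)
    (hDt : ∀ v : Fin m → V,
      Dt (wedge K m v) = ∑ i, wedge K m (Function.update v i (t (v i))))
    (hDs : ∀ v : Fin m → V,
      Ds (wedge K m v) = ∑ i, wedge K m (Function.update v i (s (v i))))
    (hDts : ∀ v : Fin m → V,
      Dts (wedge K m v) = ∑ i, wedge K m (Function.update v i (t (s (v i)))))
    (hBts : ∀ v : Fin m → V,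
      Bts (wedge K m v) = ∑ i, ∑ j, if i = j then 0 else
        wedge K m (Function.update (Function.update v i (t (v i))) j (s (v j)))) :
    Dt ∘ₗ Ds = Bts + Dts :=
  statement7_general m t s Dt Ds Dts Bts hDt hDs hDts hBts
end

section
/- Let p be a K-vector space of finite dimension k and let 1 ≤ m ≤ k. For every linear map φ : p → p, the trace of the derivation D_φ : ⋀^m p → ⋀^m p equals (k−1 choose m−1) times the trace of φ. -/
/-!
Take a basis `b` of the module and the basis `b_s = b_{i₁} ∧ ⋯ ∧ b_{i_m}` of its `m`-th exterior
power, indexed by the `m`-element sets `s = {i₁ < ⋯ < i_m}`. The coordinate at `b_s` of the wedge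
obtained from `b_s` by replacing `b_i` with `φ b_i` is the `i`-th coordinate of `φ b_i`, so the
diagonal entry of `D_φ` at `s` is `∑ i ∈ s, φ_{ii}`. In the sum over all `s`, each `φ_{ii}` is
counted once for every `s` containing `i`, that is, `(k - 1).choose (m - 1)` times.
-/

open Module Set.powersetCard exteriorPower

theorem det_updateRow_one {n R : Type*} [Fintype n] [DecidableEq n] [CommRing R] (i : n)
    (c : n → R) : ((1 : Matrix n n R).updateRow i c).det = c i := by
  rw [← Matrix.cramer_transpose_apply, Matrix.transpose_one, Matrix.cramer_one,
    Module.End.one_apply]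

theorem sum_powersetCard_sum {ι A : Type*} [AddCommMonoid A] (u : Finset ι) {m : ℕ} (hm : 1 ≤ m)
    (f : ι → A) :
    ∑ s ∈ u.powersetCard m, ∑ i ∈ s, f i = (u.card - 1).choose (m - 1) • ∑ i ∈ u, f i := by
  classical
  have card_containing {i : ι} (hi : i ∈ u) :
      ((u.powersetCard m).filter ({i} ⊆ ·)).card = (u.card - 1).choose (m - 1) := by
    simpa only [Finset.card_singleton] using
      Finset.card_filter_powersetCard_subset {i} u m (Finset.singleton_subset_iff.2 hi) hm
  calc ∑ s ∈ u.powersetCard m, ∑ i ∈ s, f i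
      = ∑ i ∈ u, ∑ _s ∈ (u.powersetCard m).filter ({i} ⊆ ·), f i :=
        Finset.sum_comm' (by grind)
    _ = (u.card - 1).choose (m - 1) • ∑ i ∈ u, f i := by
        rw [Finset.smul_sum]
        exact Finset.sum_congr rfl fun i hi => by rw [Finset.sum_const, card_containing hi]

theorem sum_ofFinEmbEquiv_symm {ι A : Type*} [LinearOrder ι] [AddCommMonoid A] {m : ℕ}
    (s : Set.powersetCard ι m) (f : ι → A) :
    ∑ j, f (ofFinEmbEquiv.symm s j) = ∑ i ∈ s.1, f i := by
  rw [← s.1.map_orderEmbOfFin_univ s.2, Finset.sum_map]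
  rfl

theorem trace_eq_sum_repr {ι R M : Type*} [Fintype ι] [CommRing R] [AddCommGroup M] [Module R M]
    (b : Basis ι R M) (f : M →ₗ[R] M) : LinearMap.trace R M f = ∑ i, b.repr (f (b i)) i := by
  classical
  simp only [LinearMap.trace_eq_matrix_trace R b, Matrix.trace, Matrix.diag_apply,
    LinearMap.toMatrix_apply]

section InducedDerivation

variable {R M : Type*} [CommRing R] [AddCommGroup M] [Module R M] {m : ℕ}

/-- `D` is the derivation `D_φ` of `⋀[R]^m M` induced by `φ`. As wedges span `⋀[R]^m M`, this
property determines `D`. -/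
def IsInducedDerivation (φ : M →ₗ[R] M) (D : ⋀[R]^m M →ₗ[R] ⋀[R]^m M) : Prop :=
  ∀ v : Fin m → M, D (wedge R m v) = ∑ i, wedge R m (Function.update v i (φ (v i)))

theorem wedge_eq_ιMulti (v : Fin m → M) : wedge R m v = ιMulti R m v := rfl

variable {ι : Type*} [LinearOrder ι] (b : Basis ι R M)

theorem repr_wedge_update (s : Set.powersetCard ι m) (j : Fin m) (x : M) :
    (b.exteriorPower m).repr (wedge R m (Function.update (b ∘ ofFinEmbEquiv.symm s) j x)) s =
      b.repr x (ofFinEmbEquiv.symm s j) := by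
  have coordinates_eq_updateRow :
      (Matrix.of fun i l => b.coord (ofFinEmbEquiv.symm s l)
        (Function.update (b ∘ ofFinEmbEquiv.symm s) j x i)) =
      (1 : Matrix (Fin m) (Fin m) R).updateRow j fun l => b.repr x (ofFinEmbEquiv.symm s l) := by
    ext i l
    obtain rfl | hij := eq_or_ne i j
    · simp
    · simp [hij, Matrix.one_apply, Finsupp.single_apply]
  rw [wedge_eq_ιMulti, basis_repr_apply, ιMultiDual_apply_ιMulti, coordinates_eq_updateRow,
    det_updateRow_one]

variable {φ : M →ₗ[R] M} {D : ⋀[R]^m M →ₗ[R] ⋀[R]^m M}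

theorem IsInducedDerivation.repr_basis_self (hD : IsInducedDerivation φ D)
    (s : Set.powersetCard ι m) :
    (b.exteriorPower m).repr (D (b.exteriorPower m s)) s = ∑ i ∈ s.1, b.repr (φ (b i)) i := by
  calc (b.exteriorPower m).repr (D (b.exteriorPower m s)) s
      = ∑ j, (b.exteriorPower m).repr (wedge R m (Function.update (b ∘ ofFinEmbEquiv.symm s) j
          (φ (b (ofFinEmbEquiv.symm s j))))) s := by
        rw [basis_apply, ιMulti_family, ← wedge_eq_ιMulti, hD, map_sum, Finsupp.finsetSum_apply]
        rfl
    _ = ∑ j, b.repr (φ (b (ofFinEmbEquiv.symm s j))) (ofFinEmbEquiv.symm s j) := by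
        simp only [repr_wedge_update]
    _ = ∑ i ∈ s.1, b.repr (φ (b i)) i :=
        sum_ofFinEmbEquiv_symm s fun i => b.repr (φ (b i)) i

theorem IsInducedDerivation.trace_eq_sum_powersetCard [Fintype ι] (hD : IsInducedDerivation φ D) :
    LinearMap.trace R (⋀[R]^m M) D =
      ∑ s ∈ Finset.univ.powersetCard m, ∑ i ∈ s, b.repr (φ (b i)) i := by
  simp only [trace_eq_sum_repr (b.exteriorPower m), hD.repr_basis_self b]
  exact (Finset.sum_subtype (p := (· ∈ Set.powersetCard ι m)) _
    (fun _ => Finset.mem_powersetCard_univ) fun s => ∑ i ∈ s, b.repr (φ (b i)) i).symm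

theorem statement8_general [Module.Free R M] [Module.Finite R M] (hm : 1 ≤ m)
    (hD : IsInducedDerivation φ D) :
    LinearMap.trace R (⋀[R]^m M) D =
      ((finrank R M - 1).choose (m - 1) : R) * LinearMap.trace R M φ := by
  nontriviality R
  let b := finBasis R M
  rw [hD.trace_eq_sum_powersetCard b, sum_powersetCard_sum _ hm, Finset.card_fin, nsmul_eq_mul,
    trace_eq_sum_repr b]

end InducedDerivation

/-- if `p` is a `K`-vector space of finite dimension `k` and `1 ≤ m ≤ k`, then
for every linear map `φ : p → p` the trace of the derivation `D_φ : ⋀^m p → ⋀^m p` equals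
`(k−1).choose (m−1)` times the trace of `φ`. -/
theorem statement8 {K : Type*} [Field K] {P : Type*} [AddCommGroup P] [Module K P]
    [FiniteDimensional K P]
    (k : ℕ) (hk : Module.finrank K P = k)
    (m : ℕ) (hm1 : 1 ≤ m) (hmk : m ≤ k)
    (φ : P →ₗ[K] P)
    (D : ⋀[K]^m P →ₗ[K] ⋀[K]^m P)
    (hD : ∀ v : Fin m → P,
      D (wedge K m v) = ∑ i, wedge K m (Function.update v i (φ (v i)))) :
    LinearMap.trace K (⋀[K]^m P) D = ((k - 1).choose (m - 1) : K) * LinearMap.trace K P φ := by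
  subst hk
  exact statement8_general hm1 hD
end

section
/- Let p ⊆ V be a nondegenerate subspace and let t₁, t₂ : V → V be tangent vectors at p, with t₁* the adjoint of t₁. Then for all p₁,…,p_m, p'₁,…,p'_m ∈ p one has ⟨D_{t₂}(p₁∧⋯∧p_m), D_{t₁}(p'₁∧⋯∧p'_m)⟩ = ⟨D_{t₁*∘t₂}(p₁∧⋯∧p_m), p'₁∧⋯∧p'_m⟩, the pairings taken in the induced hermitian form on ⋀^m V. (In the notation of the paper: (E^m t₁)* ∘ E^m t₂ = E^m(t₁* t₂) on ⋀^m p.) -/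
section Adjugate

variable {R n : Type*} [CommRing R] [Fintype n] [DecidableEq n]

theorem det_updateRow_eq_sum_mul_adjugate (A : Matrix n n R) (i : n) (b : n → R) :
    (A.updateRow i b).det = ∑ j, b j * A.adjugate j i := by
  rw [← Matrix.cramer_transpose_apply, Matrix.cramer_eq_adjugate_mulVec,
    ← Matrix.adjugate_transpose]
  exact Finset.sum_congr rfl fun j _ => mul_comm _ _

theorem adjugate_eq_det_updateCol (A : Matrix n n R) (i j : n) :
    A.adjugate j i = (A.updateCol j (Pi.single i 1)).det := by
  rw [← Matrix.cramer_apply, Matrix.cramer_eq_adjugate_mulVec, Matrix.mulVec_single_one,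
    Matrix.col_apply]

theorem adjugate_updateCol_self (A : Matrix n n R) (i j : n) (c : n → R) :
    (A.updateCol j c).adjugate j i = A.adjugate j i := by
  simp only [adjugate_eq_det_updateCol, Matrix.updateCol_idem]

end Adjugate

section CrossGram

variable {R R₁ R₂ V W n k : Type*} [CommRing R] [Semiring R₁] [Semiring R₂]
  [AddCommMonoid V] [Module R₁ V] [AddCommMonoid W] [Module R₂ W]
  {I₁ : R₁ →+* R} {I₂ : R₂ →+* R}

/-- The matrix of pairings `φ (v i) (w j)` of two families of vectors under a sesquilinear form;
for `v = w` it is the Gram matrix of `v`. -/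
def crossGram (φ : V →ₛₗ[I₁] W →ₛₗ[I₂] R) (v : n → V) (w : k → W) : Matrix n k R :=
  Matrix.of fun i j => φ (v i) (w j)

variable (φ : V →ₛₗ[I₁] W →ₛₗ[I₂] R)

theorem crossGram_update_left [DecidableEq n] (v : n → V) (w : k → W) (i : n) (x : V) :
    crossGram φ (Function.update v i x) w =
      (crossGram φ v w).updateRow i (fun j => φ x (w j)) := by
  ext r j
  rcases eq_or_ne r i with rfl | hr <;> simp [crossGram, *]

theorem crossGram_update_right [DecidableEq k] (v : n → V) (w : k → W) (j : k) (y : W) :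
    crossGram φ v (Function.update w j y) =
      (crossGram φ v w).updateCol j (fun i => φ (v i) y) := by
  ext i r
  rcases eq_or_ne r j with rfl | hr <;> simp [crossGram, *]

variable [Fintype n] [DecidableEq n]

theorem det_crossGram_update_left (v : n → V) (w : n → W) (i : n) (x : V) :
    (crossGram φ (Function.update v i x) w).det =
      ∑ j, φ x (w j) * (crossGram φ v w).adjugate j i := by
  rw [crossGram_update_left, det_updateRow_eq_sum_mul_adjugate]

theorem det_crossGram_update_update_of_orthogonal (v : n → V) (w : n → W) (i j : n) {x : V} (y : W)
    (hx : ∀ l, l ≠ j → φ x (w l) = 0) :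
    (crossGram φ (Function.update v i x) (Function.update w j y)).det =
      φ x y * (crossGram φ v w).adjugate j i := by
  rw [det_crossGram_update_left, Finset.sum_eq_single_of_mem j (Finset.mem_univ j),
    Function.update_self, crossGram_update_right, adjugate_updateCol_self]
  intro l _ hl
  rw [Function.update_of_ne hl, hx l hl, zero_mul]

end CrossGram

theorem statement10_general {R R₁ R₂ V W : Type*} [CommRing R] [CommRing R₁] [CommRing R₂]
    [AddCommGroup V] [Module R₁ V] [AddCommGroup W] [Module R₂ W]
    {I₁ : R₁ →+* R} {I₂ : R₂ →+* R} (φ : V →ₛₗ[I₁] W →ₛₗ[I₂] R) {m : ℕ}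
    (Φ : ⋀[R₁]^m V →ₛₗ[I₁] ⋀[R₂]^m W →ₛₗ[I₂] R)
    (hΦ : ∀ v w, Φ (wedge R₁ m v) (wedge R₂ m w) = (crossGram φ v w).det)
    {t s : V →ₗ[R₁] V} {u : W →ₗ[R₂] W} (hsu : ∀ x y, φ (s x) y = φ x (u y))
    {Dt Dst : ⋀[R₁]^m V →ₗ[R₁] ⋀[R₁]^m V} {Du : ⋀[R₂]^m W →ₗ[R₂] ⋀[R₂]^m W}
    (hDt : ∀ v, Dt (wedge R₁ m v) = ∑ i, wedge R₁ m (Function.update v i (t (v i))))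
    (hDu : ∀ w, Du (wedge R₂ m w) = ∑ j, wedge R₂ m (Function.update w j (u (w j))))
    (hDst : ∀ v, Dst (wedge R₁ m v) = ∑ i, wedge R₁ m (Function.update v i (s (t (v i)))))
    {v : Fin m → V} {w : Fin m → W} (horth : ∀ i j, φ (t (v i)) (w j) = 0) :
    Φ (Dt (wedge R₁ m v)) (Du (wedge R₂ m w)) = Φ (Dst (wedge R₁ m v)) (wedge R₂ m w) :=
  calc Φ (Dt (wedge R₁ m v)) (Du (wedge R₂ m w))
    _ = ∑ i, ∑ j, (crossGram φ (Function.update v i (t (v i)))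
          (Function.update w j (u (w j)))).det := by
      simp only [hDt, hDu, map_sum, LinearMap.sum_apply, hΦ]
      exact Finset.sum_comm
    _ = ∑ i, ∑ j, φ (t (v i)) (u (w j)) * (crossGram φ v w).adjugate j i :=
      Finset.sum_congr rfl fun i _ => Finset.sum_congr rfl fun j _ =>
        det_crossGram_update_update_of_orthogonal φ v w i j _ fun l _ => horth i l
    _ = ∑ i, (crossGram φ (Function.update v i (s (t (v i)))) w).det := by
      simp only [det_crossGram_update_left, hsu]
    _ = Φ (Dst (wedge R₁ m v)) (wedge R₂ m w) := by
      simp only [hDst, map_sum, LinearMap.sum_apply, hΦ]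

/-- for tangent vectors `t₁, t₂` at a nondegenerate subspace `p` and all
`p₁,…,p_m, p'₁,…,p'_m ∈ p`, one has
`⟨D_{t₂}(p₁∧⋯∧p_m), D_{t₁}(p'₁∧⋯∧p'_m)⟩ = ⟨D_{t₁*∘t₂}(p₁∧⋯∧p_m), p'₁∧⋯∧p'_m⟩`
(in the paper's notation: `(E^m t₁)* ∘ E^m t₂ = E^m (t₁* t₂)` on `⋀^m p`). -/
theorem statement10 {𝕜 : Type*} [RCLike 𝕜] {V : Type*} [AddCommGroup V] [Module 𝕜 V]
    [FiniteDimensional 𝕜 V]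
    (φ : V →ₗ[𝕜] V →ₛₗ[starRingEnd 𝕜] 𝕜)
    (hherm : ∀ x y : V, φ x y = starRingEnd 𝕜 (φ y x))
    (hnd : ∀ x : V, (∀ y : V, φ x y = 0) → x = 0)
    (p : Submodule 𝕜 V)
    (hpnd : ∀ x ∈ p, (∀ y ∈ p, φ x y = 0) → x = 0)
    (m : ℕ)
    (Φ : ⋀[𝕜]^m V →ₗ[𝕜] ⋀[𝕜]^m V →ₛₗ[starRingEnd 𝕜] 𝕜)
    (hΦ : ∀ v w : Fin m → V,
      Φ (wedge 𝕜 m v) (wedge 𝕜 m w) = (Matrix.of fun i j => φ (v i) (w j)).det)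
    (t₁ t₂ t₁s : V →ₗ[𝕜] V)
    -- `t₁` and `t₂` are tangent vectors at `p`: they map `p` into `p^⊥` and kill `p^⊥`
    (ht₁p : ∀ x ∈ p, ∀ y ∈ p, φ (t₁ x) y = 0)
    (ht₁perp : ∀ x : V, (∀ y ∈ p, φ x y = 0) → t₁ x = 0)
    (ht₂p : ∀ x ∈ p, ∀ y ∈ p, φ (t₂ x) y = 0)
    (ht₂perp : ∀ x : V, (∀ y ∈ p, φ x y = 0) → t₂ x = 0)
    (hadj₁ : ∀ v w : V, φ (t₁ v) w = φ v (t₁s w))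
    (Dt₁ Dt₂ D₁₂ : ⋀[𝕜]^m V →ₗ[𝕜] ⋀[𝕜]^m V)
    (hDt₁ : ∀ v : Fin m → V,
      Dt₁ (wedge 𝕜 m v) = ∑ i, wedge 𝕜 m (Function.update v i (t₁ (v i))))
    (hDt₂ : ∀ v : Fin m → V,
      Dt₂ (wedge 𝕜 m v) = ∑ i, wedge 𝕜 m (Function.update v i (t₂ (v i))))
    (hD₁₂ : ∀ v : Fin m → V,
      D₁₂ (wedge 𝕜 m v) = ∑ i, wedge 𝕜 m (Function.update v i (t₁s (t₂ (v i))))) :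
    ∀ pv pv' : Fin m → V, (∀ i, pv i ∈ p) → (∀ i, pv' i ∈ p) →
      Φ (Dt₂ (wedge 𝕜 m pv)) (Dt₁ (wedge 𝕜 m pv')) =
        Φ (D₁₂ (wedge 𝕜 m pv)) (wedge 𝕜 m pv') := by
  intro pv pv' hpv hpv'
  have hadj₁' : ∀ x y, φ (t₁s x) y = φ x (t₁ y) := fun x y => by rw [hherm, ← hadj₁, ← hherm]
  exact statement10_general φ Φ hΦ hadj₁' hDt₂ hDt₁ hD₁₂ fun i j => ht₂p _ (hpv i) _ (hpv' j)
end

section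
/- Let p ⊆ V be a nondegenerate subspace and let t, t₁, t₂ : V → V be tangent vectors at p, with t₁* the adjoint of t₁. Then for all p₁,…,p_m ∈ p one has D_t(D_{t₁*}(D_{t₂}(p₁∧⋯∧p_m))) = D_{t∘t₁*∘t₂}(p₁∧⋯∧p_m) + B(t, t₁*∘t₂)(p₁∧⋯∧p_m) in ⋀^m V. (In the paper's notation: E^m t (E^m t₁)* E^m t₂ − E^m(t t₁* t₂) = B(t, t₁* t₂) on ⋀^m p; this identity yields the Gauss equation computing the curvature tensor of Gr⁰(k,V).) -/
/-!
Replacing one slot at a time defines, for any multilinear map, an operation `D_t` with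
`D_t D_s = D_{ts} + B(t, s)`: the second replacement hits either the same slot or another one.
Since `V = p ⊕ p^⊥`, a tangent vector `t₁` at `p` maps all of `V` into `p^⊥`, so its adjoint `t₁*`
kills `p`. Hence `B(t₁*, t₂)` vanishes on tuples in `p`, where the composition law gives
`D_{t₁*} D_{t₂} = D_{t₁* t₂}`; applying it once more to `D_t D_{t₁* t₂}` gives the claim.
-/

open Function Module

section SlotSum

variable {R ι M N N' : Type*} [Semiring R] [Fintype ι] [DecidableEq ι]
  [AddCommMonoid M] [Module R M] [AddCommMonoid N] [Module R N] [AddCommMonoid N'] [Module R N']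

/-- The Leibniz-type action of an endomorphism `t` on a multilinear map `f`: apply `t` in one slot
and sum over all slots. For `f` the wedge product this is `D_t` on decomposable vectors. -/
def slotSum (f : MultilinearMap R (fun _ : ι => M) N) (t : M →ₗ[R] M) :
    MultilinearMap R (fun _ : ι => M) N :=
  ∑ i, f.compLinearMap (update (fun _ => LinearMap.id) i t)

/-- Apply `t` and `s` in two distinct slots of a multilinear map and sum over all ordered pairs of
slots. For `f` the wedge product this is `B(t, s)` on decomposable vectors. -/
def slotPairSum (f : MultilinearMap R (fun _ : ι => M) N) (t s : M →ₗ[R] M) (v : ι → M) : N :=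
  ∑ i, ∑ j, if i = j then 0 else f (update (update v i (t (v i))) j (s (v j)))

variable (f : MultilinearMap R (fun _ : ι => M) N) (t s u : M →ₗ[R] M)

theorem slotSum_apply (v : ι → M) : slotSum f t v = ∑ i, f (update v i (t (v i))) := by
  rw [slotSum, sum_apply]
  refine Finset.sum_congr rfl fun i _ => ?_
  rw [MultilinearMap.compLinearMap_apply]
  congr 1
  ext j
  obtain rfl | hji := eq_or_ne j i <;> simp [*]

theorem compMultilinearMap_slotSum (g : N →ₗ[R] N') :
    g.compMultilinearMap (slotSum f t) = slotSum (g.compMultilinearMap f) t := by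
  ext v
  simp only [LinearMap.compMultilinearMap_apply, slotSum_apply, map_sum]

variable {f t} in
theorem compMultilinearMap_eq_slotSum_iff {D : N →ₗ[R] N} :
    D.compMultilinearMap f = slotSum f t ↔ ∀ v, D (f v) = ∑ i, f (update v i (t (v i))) := by
  simp only [MultilinearMap.ext_iff, LinearMap.compMultilinearMap_apply, slotSum_apply]

theorem slotSum_slotSum_apply (v : ι → M) :
    slotSum (slotSum f t) s v = slotSum f (t ∘ₗ s) v + slotPairSum f t s v := by
  have hsplit (i j : ι) :
      f (update (update v j (s (v j))) i (t (update v j (s (v j)) i))) =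
        (if i = j then f (update v i (t (s (v i)))) else 0) +
          if i = j then 0 else f (update (update v i (t (v i))) j (s (v j))) := by
    obtain rfl | hij := eq_or_ne i j
    · simp
    · simp [hij, update_comm hij]
  calc slotSum (slotSum f t) s v
      = ∑ i, ∑ j, f (update (update v j (s (v j))) i (t (update v j (s (v j)) i))) := by
        simp only [slotSum_apply]
        exact Finset.sum_comm
    _ = slotSum f (t ∘ₗ s) v + slotPairSum f t s v := by
        simp only [hsplit, Finset.sum_add_distrib, Finset.sum_ite_eq, Finset.mem_univ, if_true,
          slotSum_apply, slotPairSum, LinearMap.comp_apply]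

variable {t} in
theorem slotPairSum_eq_zero_of_left {v : ι → M} (hv : ∀ i, t (v i) = 0) :
    slotPairSum f t s v = 0 := by
  refine Finset.sum_eq_zero fun i _ => Finset.sum_eq_zero fun j _ => ?_
  obtain rfl | hij := eq_or_ne i j
  · exact if_pos rfl
  · rw [if_neg hij, update_comm hij, hv, MultilinearMap.map_update_zero]

variable {s} in
theorem slotSum_slotSum_slotSum_apply_of_map_eq_zero {v : ι → M} (hv : ∀ i, s (v i) = 0) :
    slotSum (slotSum (slotSum f t) s) u v =
      slotSum f (t ∘ₗ s ∘ₗ u) v + slotPairSum f t (s ∘ₗ u) v := by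
  rw [slotSum_slotSum_apply (slotSum f t), slotPairSum_eq_zero_of_left _ _ hv, add_zero,
    slotSum_slotSum_apply]

end SlotSum

theorem isAdjointPair_apply_eq_zero {R M N : Type*} [CommSemiring R] {σ : R →+* R}
    [AddCommMonoid M] [Module R M] [AddCommMonoid N] [Module R N]
    {φ : M →ₗ[R] M →ₛₗ[σ] N} (hφ : φ.SeparatingRight) {t s : M → M}
    (hadj : φ.IsAdjointPair φ t s) {w : M} (hw : ∀ v, φ (t v) w = 0) : s w = 0 :=
  hφ _ fun v => (hadj v w).symm.trans (hw v)

section TangentVector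

variable {K V : Type*} [Field K] {σ : K →+* K} [AddCommGroup V] [Module K V]

theorem isCompl_orthogonalBilin_flip (φ : V →ₗ[K] V →ₛₗ[σ] K) (p : Submodule K V)
    [FiniteDimensional K p] (hp : (φ.domRestrict₁₂ p p).SeparatingLeft) :
    IsCompl p (p.orthogonalBilin φ.flip) := by
  let b := finBasis K p
  let T : V →ₗ[K] Fin (finrank K p) → K := LinearMap.pi fun i => φ.flip (b i)
  have mem_orthogonal_of_apply_eq_zero {x : V} (hx : T x = 0) : x ∈ p.orthogonalBilin φ.flip := by
    have : φ x ∘ₛₗ p.subtype = 0 := b.ext fun i => congrFun hx i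
    exact fun y hy => LinearMap.congr_fun this ⟨y, hy⟩
  have eq_zero_of_mem_orthogonal (x : p) (hx : (x : V) ∈ p.orthogonalBilin φ.flip) : x = 0 :=
    hp x fun y => hx y y.2
  have hinj : Injective (T ∘ₗ p.subtype) := (injective_iff_map_eq_zero _).2 fun x hx =>
    eq_zero_of_mem_orthogonal x (mem_orthogonal_of_apply_eq_zero hx)
  have hsurj : Surjective (T ∘ₗ p.subtype) :=
    (LinearMap.injective_iff_surjective_of_finrank_eq_finrank (by simp)).1 hinj
  refine ⟨Submodule.disjoint_def.2 fun x hx hx' =>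
      congrArg Subtype.val (eq_zero_of_mem_orthogonal ⟨x, hx⟩ hx'),
    Submodule.codisjoint_iff_exists_add_eq.2 fun v => ?_⟩
  obtain ⟨a, ha⟩ := hsurj (T v)
  refine ⟨a, v - a, a.2, mem_orthogonal_of_apply_eq_zero ?_, add_sub_cancel _ _⟩
  rw [map_sub, sub_eq_zero]
  exact ha.symm

/-- Tangent vectors at `p` to the Grassmannian of nondegenerate subspaces, encoded as endomorphisms
of `V` mapping `p` into `p^⊥` and vanishing on `p^⊥`. The flip makes `p^⊥` the set of `x` with
`φ x y = 0` for all `y ∈ p`. -/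
structure IsTangentVector (φ : V →ₗ[K] V →ₛₗ[σ] K) (p : Submodule K V) (t : V →ₗ[K] V) : Prop where
  map_mem_orthogonal : ∀ x ∈ p, t x ∈ p.orthogonalBilin φ.flip
  map_orthogonal_eq_zero : ∀ x ∈ p.orthogonalBilin φ.flip, t x = 0

theorem IsTangentVector.apply_mem_orthogonal {φ : V →ₗ[K] V →ₛₗ[σ] K} {p : Submodule K V}
    {t : V →ₗ[K] V} (ht : IsTangentVector φ p t)
    (hp : Codisjoint p (p.orthogonalBilin φ.flip)) (v : V) : t v ∈ p.orthogonalBilin φ.flip := by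
  obtain ⟨a, b, ha, hb, rfl⟩ := Submodule.codisjoint_iff_exists_add_eq.1 hp v
  rw [map_add, ht.map_orthogonal_eq_zero b hb, add_zero]
  exact ht.map_mem_orthogonal a ha

end TangentVector

theorem statement11_general {R ι V N P : Type*} [CommSemiring R] {σ : R →+* R}
    [Fintype ι] [DecidableEq ι] [AddCommMonoid V] [Module R V] [AddCommMonoid N] [Module R N]
    [AddCommMonoid P] [Module R P] (φ : V →ₗ[R] V →ₛₗ[σ] P) (hφ : φ.SeparatingRight)
    (p : Submodule R V) (f : MultilinearMap R (fun _ : ι => V) N) (t t₁ t₂ t₁s : V →ₗ[R] V)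
    (ht₁ : ∀ v, t₁ v ∈ p.orthogonalBilin φ.flip) (hadj₁ : φ.IsAdjointPair φ t₁ t₁s)
    (Dt Dt₁s Dt₂ Dcomp Bmap : N →ₗ[R] N)
    (hDt : Dt.compMultilinearMap f = slotSum f t)
    (hDt₁s : Dt₁s.compMultilinearMap f = slotSum f t₁s)
    (hDt₂ : Dt₂.compMultilinearMap f = slotSum f t₂)
    (hDcomp : Dcomp.compMultilinearMap f = slotSum f (t ∘ₗ t₁s ∘ₗ t₂))
    (hBmap : ∀ v, Bmap (f v) = slotPairSum f t (t₁s ∘ₗ t₂) v)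
    (v : ι → V) (hv : ∀ i, v i ∈ p) :
    Dt (Dt₁s (Dt₂ (f v))) = Dcomp (f v) + Bmap (f v) := by
  have ht₁s (i : ι) : t₁s (v i) = 0 :=
    isAdjointPair_apply_eq_zero hφ hadj₁ fun w => ht₁ w _ (hv i)
  have hD : Dt.compMultilinearMap (Dt₁s.compMultilinearMap (Dt₂.compMultilinearMap f)) =
      slotSum (slotSum (slotSum f t) t₁s) t₂ := by
    simp only [hDt₂, hDt₁s, hDt, compMultilinearMap_slotSum]
  calc Dt (Dt₁s (Dt₂ (f v)))
      = slotSum (slotSum (slotSum f t) t₁s) t₂ v := MultilinearMap.congr_fun hD v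
    _ = slotSum f (t ∘ₗ t₁s ∘ₗ t₂) v + slotPairSum f t (t₁s ∘ₗ t₂) v :=
        slotSum_slotSum_slotSum_apply_of_map_eq_zero f t t₂ ht₁s
    _ = Dcomp (f v) + Bmap (f v) := by
        rw [← hDcomp, ← hBmap, LinearMap.compMultilinearMap_apply]

/-- for tangent vectors `t, t₁, t₂` at a nondegenerate subspace `p` and all
`p₁,…,p_m ∈ p`, one has
`D_t(D_{t₁*}(D_{t₂}(p₁∧⋯∧p_m))) = D_{t∘t₁*∘t₂}(p₁∧⋯∧p_m) + B(t, t₁*∘t₂)(p₁∧⋯∧p_m)`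
(in the paper's notation: `E^m t (E^m t₁)* E^m t₂ − E^m(t t₁* t₂) = B(t, t₁* t₂)` on
`⋀^m p`). -/
theorem statement11 {𝕜 : Type*} [RCLike 𝕜] {V : Type*} [AddCommGroup V] [Module 𝕜 V]
    [FiniteDimensional 𝕜 V]
    (φ : V →ₗ[𝕜] V →ₛₗ[starRingEnd 𝕜] 𝕜)
    (hherm : ∀ x y : V, φ x y = starRingEnd 𝕜 (φ y x))
    (hnd : ∀ x : V, (∀ y : V, φ x y = 0) → x = 0)
    (p : Submodule 𝕜 V)
    (hpnd : ∀ x ∈ p, (∀ y ∈ p, φ x y = 0) → x = 0)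
    (m : ℕ)
    (t t₁ t₂ t₁s : V →ₗ[𝕜] V)
    -- `t`, `t₁` and `t₂` are tangent vectors at `p`: they map `p` into `p^⊥` and kill `p^⊥`
    (htp : ∀ x ∈ p, ∀ y ∈ p, φ (t x) y = 0)
    (htperp : ∀ x : V, (∀ y ∈ p, φ x y = 0) → t x = 0)
    (ht₁p : ∀ x ∈ p, ∀ y ∈ p, φ (t₁ x) y = 0)
    (ht₁perp : ∀ x : V, (∀ y ∈ p, φ x y = 0) → t₁ x = 0)
    (ht₂p : ∀ x ∈ p, ∀ y ∈ p, φ (t₂ x) y = 0)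
    (ht₂perp : ∀ x : V, (∀ y ∈ p, φ x y = 0) → t₂ x = 0)
    (hadj₁ : ∀ v w : V, φ (t₁ v) w = φ v (t₁s w))
    (Dt Dt₁s Dt₂ Dcomp Bmap : ⋀[𝕜]^m V →ₗ[𝕜] ⋀[𝕜]^m V)
    (hDt : ∀ v : Fin m → V,
      Dt (wedge 𝕜 m v) = ∑ i, wedge 𝕜 m (Function.update v i (t (v i))))
    (hDt₁s : ∀ v : Fin m → V,
      Dt₁s (wedge 𝕜 m v) = ∑ i, wedge 𝕜 m (Function.update v i (t₁s (v i))))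
    (hDt₂ : ∀ v : Fin m → V,
      Dt₂ (wedge 𝕜 m v) = ∑ i, wedge 𝕜 m (Function.update v i (t₂ (v i))))
    (hDcomp : ∀ v : Fin m → V,
      Dcomp (wedge 𝕜 m v) = ∑ i, wedge 𝕜 m (Function.update v i (t (t₁s (t₂ (v i))))))
    (hBmap : ∀ v : Fin m → V,
      Bmap (wedge 𝕜 m v) = ∑ i, ∑ j, if i = j then 0 else
        wedge 𝕜 m (Function.update (Function.update v i (t (v i))) j (t₁s (t₂ (v j))))) :
    ∀ pv : Fin m → V, (∀ i, pv i ∈ p) →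
      Dt (Dt₁s (Dt₂ (wedge 𝕜 m pv))) = Dcomp (wedge 𝕜 m pv) + Bmap (wedge 𝕜 m pv) := by
  have hsep : φ.SeparatingRight := fun y hy => hnd y fun x => by rw [hherm, hy, map_zero]
  have hcompl : IsCompl p (p.orthogonalBilin φ.flip) :=
    isCompl_orthogonalBilin_flip φ p fun x hx =>
      Subtype.ext (hpnd x x.2 fun y hy => hx ⟨y, hy⟩)
  have ht₁ : IsTangentVector φ p t₁ := ⟨ht₁p, ht₁perp⟩
  exact statement11_general φ hsep p (exteriorPower.ιMulti 𝕜 m).toMultilinearMap t t₁ t₂ t₁s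
    (ht₁.apply_mem_orthogonal hcompl.codisjoint) hadj₁ Dt Dt₁s Dt₂ Dcomp Bmap
    (compMultilinearMap_eq_slotSum_iff.2 hDt) (compMultilinearMap_eq_slotSum_iff.2 hDt₁s)
    (compMultilinearMap_eq_slotSum_iff.2 hDt₂) (compMultilinearMap_eq_slotSum_iff.2 hDcomp) hBmap
end

section
/- Let p ⊆ V be a nondegenerate subspace and let t₁, w, t₂, t : V → V be tangent vectors at p, with t₁*, w* the adjoints of t₁, w. Then for all p₁,…,p_m ∈ p one has B(t₁*, w*)(B(t₂, t)(p₁∧⋯∧p_m)) = B(t₁*∘t₂, w*∘t)(p₁∧⋯∧p_m) + B(w*∘t₂, t₁*∘t)(p₁∧⋯∧p_m) in ⋀^m V. (In the paper's notation: (B(t₁,w))* B(t₂,t) = B(t₁*t₂, w*t) + B(w*t₂, t₁*t) on ⋀^m p.) -/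
section PairAction

variable {ι V : Type*} [DecidableEq ι]

/-- The family `v` with `f` applied in slot `i` and `g` applied in slot `j`, intended for `i ≠ j`
(for `i = j` only `g` is applied). -/
def mapPair (f g : V → V) (i j : ι) (v : ι → V) : ι → V :=
  Function.update (Function.update v i (f (v i))) j (g (v j))

theorem mapPair_apply_left (f g : V → V) {i j : ι} (hij : i ≠ j) (v : ι → V) :
    mapPair f g i j v i = f (v i) := by
  simp [mapPair, hij]

theorem mapPair_apply_right (f g : V → V) (i j : ι) (v : ι → V) :
    mapPair f g i j v j = g (v j) := by
  simp [mapPair]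

theorem mapPair_apply_of_ne (f g : V → V) {i j k : ι} (hi : k ≠ i) (hj : k ≠ j) (v : ι → V) :
    mapPair f g i j v k = v k := by
  simp [mapPair, hi, hj]

theorem mapPair_swap (f g : V → V) {i j : ι} (hij : i ≠ j) (v : ι → V) :
    mapPair f g i j v = mapPair g f j i v :=
  Function.update_comm hij _ _ _

theorem mapPair_mapPair (f' g' f g : V → V) {i j : ι} (hij : i ≠ j) (v : ι → V) :
    mapPair f' g' i j (mapPair f g i j v) = mapPair (f' ∘ f) (g' ∘ g) i j v := by
  ext k
  rcases eq_or_ne k j with rfl | hj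
  · simp only [mapPair_apply_right, Function.comp_apply]
  rcases eq_or_ne k i with rfl | hi
  · simp only [mapPair_apply_left _ _ hij, Function.comp_apply]
  · simp only [mapPair_apply_of_ne _ _ hi hj]

variable [Fintype ι] {R N : Type*} [Semiring R] [AddCommMonoid V] [Module R V]
  [AddCommMonoid N] [Module R N]

/-- The sum of the values of `μ` at the families obtained from `v` by applying `f` in one slot and
`g` in another one. For `μ` the wedge product this is the operator `B(f, g)` of the paper. -/
def sumMapPair (μ : MultilinearMap R (fun _ : ι => V) N) (f g : V → V) (v : ι → V) : N :=
  ∑ i, ∑ j, if i = j then 0 else μ (mapPair f g i j v)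

theorem sumMapPair_eq_add (μ : MultilinearMap R (fun _ : ι => V) N) {f g : V → V} {v : ι → V}
    {i j : ι} (hij : i ≠ j) (hf : ∀ k, k ≠ i → k ≠ j → f (v k) = 0)
    (hg : ∀ k, k ≠ i → k ≠ j → g (v k) = 0) :
    sumMapPair μ f g v = μ (mapPair f g i j v) + μ (mapPair f g j i v) := by
  have eq_zero_of_left (k l : ι) (hki : k ≠ i) (hkj : k ≠ j) :
      (if k = l then 0 else μ (mapPair f g k l v)) = 0 := by
    refine ite_eq_left_iff.2 fun hkl => μ.map_coord_zero k ?_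
    rw [mapPair_apply_left f g hkl, hf k hki hkj]
  have eq_zero_of_right (k l : ι) (hli : l ≠ i) (hlj : l ≠ j) :
      (if k = l then 0 else μ (mapPair f g k l v)) = 0 := by
    refine ite_eq_left_iff.2 fun _ => μ.map_coord_zero l ?_
    rw [mapPair_apply_right, hg l hli hlj]
  have inner_sum_eq (k l : ι) (hkl : k ≠ l) (h : ∀ n, n ≠ k → n ≠ l → n ≠ i ∧ n ≠ j) :
      (∑ n, if k = n then 0 else μ (mapPair f g k n v)) = μ (mapPair f g k l v) := by
    rw [Fintype.sum_eq_single l, if_neg hkl]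
    intro n hnl
    rcases eq_or_ne k n with hkn | hkn
    · exact if_pos hkn
    · exact (h n hkn.symm hnl).elim (eq_zero_of_right k n)
  rw [sumMapPair, Fintype.sum_eq_add i j hij, inner_sum_eq i j hij fun n hi hj => ⟨hi, hj⟩,
    inner_sum_eq j i hij.symm fun n hj hi => ⟨hi, hj⟩]
  exact fun k hk => Finset.sum_eq_zero fun l _ => eq_zero_of_left k l hk.1 hk.2

theorem sumMapPair_mapPair (μ : MultilinearMap R (fun _ : ι => V) N) {f' g' : V → V} (f g : V → V)
    {v : ι → V} (hf' : ∀ k, f' (v k) = 0) (hg' : ∀ k, g' (v k) = 0) {i j : ι} (hij : i ≠ j) :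
    sumMapPair μ f' g' (mapPair f g i j v) =
      μ (mapPair (f' ∘ f) (g' ∘ g) i j v) + μ (mapPair (g' ∘ f) (f' ∘ g) i j v) := by
  rw [sumMapPair_eq_add μ hij, mapPair_mapPair f' g' f g hij, mapPair_swap f' g' hij.symm,
    mapPair_mapPair g' f' f g hij]
  · exact fun k hi hj => by rw [mapPair_apply_of_ne f g hi hj, hf']
  · exact fun k hi hj => by rw [mapPair_apply_of_ne f g hi hj, hg']

theorem sum_sumMapPair_mapPair (μ : MultilinearMap R (fun _ : ι => V) N) {f' g' : V → V}
    (f g : V → V) {v : ι → V} (hf' : ∀ k, f' (v k) = 0) (hg' : ∀ k, g' (v k) = 0) :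
    (∑ i, ∑ j, if i = j then 0 else sumMapPair μ f' g' (mapPair f g i j v)) =
      sumMapPair μ (f' ∘ f) (g' ∘ g) v + sumMapPair μ (g' ∘ f) (f' ∘ g) v := by
  simp only [sumMapPair, ← Finset.sum_add_distrib]
  refine Fintype.sum_congr _ _ fun i => Fintype.sum_congr _ _ fun j => ?_
  split_ifs with hij
  · exact (add_zero 0).symm
  · exact sumMapPair_mapPair μ f g hf' hg' hij

end PairAction

section ExteriorPower

variable {R V : Type*} [CommRing R] [AddCommGroup V] [Module R V] {m : ℕ}

/-- `B` is the operator `B(f, g)` on `⋀[R]^m V`, characterized by its values on wedges. -/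
def IsPairOperator (B : ⋀[R]^m V →ₗ[R] ⋀[R]^m V) (f g : V →ₗ[R] V) : Prop :=
  ∀ v, B (wedge R m v) = sumMapPair (exteriorPower.ιMulti R m).toMultilinearMap f g v

theorem IsPairOperator.apply_apply_wedge {B₁ B₂ B₃ B₄ : ⋀[R]^m V →ₗ[R] ⋀[R]^m V}
    {f' g' f g : V →ₗ[R] V} (hB₁ : IsPairOperator B₁ f' g') (hB₂ : IsPairOperator B₂ f g)
    (hB₃ : IsPairOperator B₃ (f' ∘ₗ f) (g' ∘ₗ g)) (hB₄ : IsPairOperator B₄ (g' ∘ₗ f) (f' ∘ₗ g))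
    {v : Fin m → V} (hf' : ∀ k, f' (v k) = 0) (hg' : ∀ k, g' (v k) = 0) :
    B₁ (B₂ (wedge R m v)) = B₃ (wedge R m v) + B₄ (wedge R m v) := by
  let μ := (exteriorPower.ιMulti R m (M := V)).toMultilinearMap
  have hB₁μ (u : Fin m → V) : B₁ (μ u) = sumMapPair μ f' g' u := hB₁ u
  calc B₁ (B₂ (wedge R m v))
      = B₁ (sumMapPair μ f g v) := by rw [hB₂]
    _ = ∑ i, ∑ j, if i = j then 0 else sumMapPair μ f' g' (mapPair f g i j v) := by
        rw [sumMapPair]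
        simp only [map_sum, apply_ite B₁, map_zero, hB₁μ]
    _ = B₃ (wedge R m v) + B₄ (wedge R m v) := by
        rw [sum_sumMapPair_mapPair μ f g hf' hg', hB₃, hB₄]
        simp only [LinearMap.coe_comp, μ]

end ExteriorPower

section TangentVector

variable {R V M : Type*} [CommRing R] [AddCommGroup V] [Module R V] [AddCommGroup M] [Module R M]
  {σ : R →+* R}

/-- The orthogonal complement `{x | ∀ y ∈ p, φ x y = 0}` of `p` for a sesquilinear form `φ`. -/
abbrev leftOrthogonal (φ : V →ₗ[R] V →ₛₗ[σ] M) (p : Submodule R V) : Submodule R V :=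
  p.orthogonalBilin φ.flip

/-- `t` is a tangent vector at `p`, viewed as a point of the Grassmannian: it maps `p` into its
orthogonal complement and vanishes on that complement. -/
structure IsTangentVector_s12 (φ : V →ₗ[R] V →ₛₗ[σ] M) (p : Submodule R V) (t : V →ₗ[R] V) : Prop where
  mem_leftOrthogonal : ∀ x ∈ p, t x ∈ leftOrthogonal φ p
  apply_eq_zero : ∀ x ∈ leftOrthogonal φ p, t x = 0

variable {φ : V →ₗ[R] V →ₛₗ[σ] M} {p : Submodule R V} {t ts : V →ₗ[R] V}

theorem IsTangentVector_s12.range_le (ht : IsTangentVector_s12 φ p t)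
    (hp : Codisjoint p (leftOrthogonal φ p)) : LinearMap.range t ≤ leftOrthogonal φ p := by
  rintro _ ⟨v, rfl⟩
  obtain ⟨q, r, hq, hr, rfl⟩ := Submodule.codisjoint_iff_exists_add_eq.1 hp v
  rw [map_add, ht.apply_eq_zero r hr, add_zero]
  exact ht.mem_leftOrthogonal q hq

theorem IsTangentVector_s12.adjoint_apply_eq_zero (ht : IsTangentVector_s12 φ p t)
    (hφ : φ.SeparatingRight) (hp : Codisjoint p (leftOrthogonal φ p))
    (hadj : LinearMap.IsAdjointPair φ φ t ts) {x : V} (hx : x ∈ p) : ts x = 0 := by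
  refine hφ _ fun v => ?_
  rw [← hadj]
  exact ht.range_le hp ⟨v, rfl⟩ x hx

end TangentVector

section Nondegenerate

variable {K V : Type*} [Field K] [AddCommGroup V] [Module K V]

theorem codisjoint_ker_of_disjoint_of_finrank_eq {W : Type*} [AddCommGroup W] [Module K W]
    [FiniteDimensional K W] {p : Submodule K V} [FiniteDimensional K p] (T : V →ₗ[K] W)
    (h : Module.finrank K p = Module.finrank K W) (hp : Disjoint p (LinearMap.ker T)) :
    Codisjoint p (LinearMap.ker T) := by
  have hinj : Function.Injective (T.domRestrict p) :=
    LinearMap.injective_domRestrict_iff.2 hp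
  have hsurj : Function.Surjective (T.domRestrict p) :=
    (LinearMap.injective_iff_surjective_of_finrank_eq_finrank h).1 hinj
  rw [codisjoint_iff, ← Submodule.comap_map_eq, ← LinearMap.range_domRestrict,
    LinearMap.range_eq_top.2 hsurj, Submodule.comap_top]

theorem codisjoint_leftOrthogonal_of_disjoint {σ : K →+* K} {φ : V →ₗ[K] V →ₛₗ[σ] K}
    {p : Submodule K V} [FiniteDimensional K p] (hp : Disjoint p (leftOrthogonal φ p)) :
    Codisjoint p (leftOrthogonal φ p) := by
  let b := Module.finBasis K p
  let T : V →ₗ[K] Fin (Module.finrank K p) → K := LinearMap.pi fun i => φ.flip (b i)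
  have hT : leftOrthogonal φ p = LinearMap.ker T := by
    ext x
    refine ⟨fun hx => LinearMap.mem_ker.2 (funext fun i => hx (b i) (b i).2), fun hx y hy => ?_⟩
    have h : (φ x).domRestrict p = 0 := b.ext fun i => congrFun hx i
    exact LinearMap.congr_fun h ⟨y, hy⟩
  rw [hT] at hp ⊢
  exact codisjoint_ker_of_disjoint_of_finrank_eq T (by simp) hp

end Nondegenerate

theorem statement12_general {R V M : Type*} [CommRing R] [AddCommGroup V] [Module R V]
    [AddCommGroup M] [Module R M] {σ : R →+* R} {φ : V →ₗ[R] V →ₛₗ[σ] M}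
    (hφ : φ.SeparatingRight) {p : Submodule R V} (hp : Codisjoint p (leftOrthogonal φ p))
    {m : ℕ} {t₁ w t₂ t t₁s ws : V →ₗ[R] V}
    (ht₁ : IsTangentVector_s12 φ p t₁) (hw : IsTangentVector_s12 φ p w)
    (hadj₁ : LinearMap.IsAdjointPair φ φ t₁ t₁s) (hadjw : LinearMap.IsAdjointPair φ φ w ws)
    {B₁ B₂ B₃ B₄ : ⋀[R]^m V →ₗ[R] ⋀[R]^m V}
    (hB₁ : IsPairOperator B₁ t₁s ws) (hB₂ : IsPairOperator B₂ t₂ t)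
    (hB₃ : IsPairOperator B₃ (t₁s ∘ₗ t₂) (ws ∘ₗ t))
    (hB₄ : IsPairOperator B₄ (ws ∘ₗ t₂) (t₁s ∘ₗ t))
    {v : Fin m → V} (hv : ∀ i, v i ∈ p) :
    B₁ (B₂ (wedge R m v)) = B₃ (wedge R m v) + B₄ (wedge R m v) :=
  hB₁.apply_apply_wedge hB₂ hB₃ hB₄ (fun i => ht₁.adjoint_apply_eq_zero hφ hp hadj₁ (hv i))
    fun i => hw.adjoint_apply_eq_zero hφ hp hadjw (hv i)

/-- for tangent vectors `t₁, w, t₂, t` at a nondegenerate subspace `p` and all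
`p₁,…,p_m ∈ p`, one has
`B(t₁*, w*)(B(t₂, t)(p₁∧⋯∧p_m)) = B(t₁*∘t₂, w*∘t)(p₁∧⋯∧p_m) + B(w*∘t₂, t₁*∘t)(p₁∧⋯∧p_m)`
(in the paper's notation: `(B(t₁,w))* B(t₂,t) = B(t₁*t₂, w*t) + B(w*t₂, t₁*t)` on `⋀^m p`). -/
theorem statement12 {𝕜 : Type*} [RCLike 𝕜] {V : Type*} [AddCommGroup V] [Module 𝕜 V]
    [FiniteDimensional 𝕜 V]
    (φ : V →ₗ[𝕜] V →ₛₗ[starRingEnd 𝕜] 𝕜)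
    (hherm : ∀ x y : V, φ x y = starRingEnd 𝕜 (φ y x))
    (hnd : ∀ x : V, (∀ y : V, φ x y = 0) → x = 0)
    (p : Submodule 𝕜 V)
    (hpnd : ∀ x ∈ p, (∀ y ∈ p, φ x y = 0) → x = 0)
    (m : ℕ)
    (t₁ w t₂ t t₁s ws : V →ₗ[𝕜] V)
    -- `t₁`, `w`, `t₂`, `t` are tangent vectors at `p`: they map `p` into `p^⊥`, kill `p^⊥`
    (ht₁p : ∀ x ∈ p, ∀ y ∈ p, φ (t₁ x) y = 0)
    (ht₁perp : ∀ x : V, (∀ y ∈ p, φ x y = 0) → t₁ x = 0)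
    (hwp : ∀ x ∈ p, ∀ y ∈ p, φ (w x) y = 0)
    (hwperp : ∀ x : V, (∀ y ∈ p, φ x y = 0) → w x = 0)
    (ht₂p : ∀ x ∈ p, ∀ y ∈ p, φ (t₂ x) y = 0)
    (ht₂perp : ∀ x : V, (∀ y ∈ p, φ x y = 0) → t₂ x = 0)
    (htp : ∀ x ∈ p, ∀ y ∈ p, φ (t x) y = 0)
    (htperp : ∀ x : V, (∀ y ∈ p, φ x y = 0) → t x = 0)
    (hadj₁ : ∀ v u : V, φ (t₁ v) u = φ v (t₁s u))
    (hadjw : ∀ v u : V, φ (w v) u = φ v (ws u))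
    (B₁ B₂ B₃ B₄ : ⋀[𝕜]^m V →ₗ[𝕜] ⋀[𝕜]^m V)
    -- `B₁ = B(t₁*, w*)`
    (hB₁ : ∀ v : Fin m → V,
      B₁ (wedge 𝕜 m v) = ∑ i, ∑ j, if i = j then 0 else
        wedge 𝕜 m (Function.update (Function.update v i (t₁s (v i))) j (ws (v j))))
    -- `B₂ = B(t₂, t)`
    (hB₂ : ∀ v : Fin m → V,
      B₂ (wedge 𝕜 m v) = ∑ i, ∑ j, if i = j then 0 else
        wedge 𝕜 m (Function.update (Function.update v i (t₂ (v i))) j (t (v j))))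
    -- `B₃ = B(t₁*∘t₂, w*∘t)`
    (hB₃ : ∀ v : Fin m → V,
      B₃ (wedge 𝕜 m v) = ∑ i, ∑ j, if i = j then 0 else
        wedge 𝕜 m (Function.update (Function.update v i (t₁s (t₂ (v i)))) j (ws (t (v j)))))
    -- `B₄ = B(w*∘t₂, t₁*∘t)`
    (hB₄ : ∀ v : Fin m → V,
      B₄ (wedge 𝕜 m v) = ∑ i, ∑ j, if i = j then 0 else
        wedge 𝕜 m (Function.update (Function.update v i (ws (t₂ (v i)))) j (t₁s (t (v j))))) :
    ∀ pv : Fin m → V, (∀ i, pv i ∈ p) →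
      B₁ (B₂ (wedge 𝕜 m pv)) = B₃ (wedge 𝕜 m pv) + B₄ (wedge 𝕜 m pv) := by
  have hφ : φ.SeparatingRight := fun y hy => hnd y fun x => by rw [hherm, hy, map_zero]
  have hp := codisjoint_leftOrthogonal_of_disjoint (φ := φ) (Submodule.disjoint_def.2 hpnd)
  exact fun _ => statement12_general hφ hp ⟨ht₁p, ht₁perp⟩ ⟨hwp, hwperp⟩ hadj₁ hadjw hB₁ hB₂ hB₃ hB₄
end

section
/- Let p and q be finite-dimensional real vector spaces with nondegenerate symmetric bilinear forms, dim p = k, dim q = n − k (so n = dim p + dim q). For all linear maps t, t₁ : p → q, the trace of the linear endomorphism of Hom(p,q) given by t₂ ↦ t∘t₁*∘t₂ + t₂∘t₁*∘t − t∘t₂*∘t₁ − t₁∘t₂*∘t equals (n − 2)·tr(t₁*∘t). (This is the algebraic content of the statement that Gr⁰_ℝ(k,V) is Einstein with constant n − 2, the curvature tensor being R(t₁,t₂)t = tt₁*t₂ + t₂t₁*t − tt₂*t₁ − t₁t₂*t.) -/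
/-!
A trace on `Hom(M, N)` is computed by expanding the maps that parametrise the operator into rank-one
maps `ξ ⊗ y`. If both parameters are rank-one, then so is the operator, and the trace of a rank-one
operator `θ ⊗ s` is `θ s`. This gives `h ↦ g ∘ h ∘ f` the trace `tr f * tr g`, so the first two
terms of the curvature contribute `(dim p + dim q) * tr (t₁* ∘ t)`. For `h ↦ a ∘ h* ∘ b` with
`a = ξ ⊗ y` and `b = η ⊗ z`, both its trace and `tr (a* ∘ b)` are `⟨y, z⟩ * ⟨ξ, η⟩`, so each of the
last two terms contributes `-tr (t₁* ∘ t)`.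
-/

section TraceHom

open LinearMap

variable {R M N : Type*} [CommRing R] [AddCommGroup M] [Module R M] [AddCommGroup N] [Module R N]

theorem linearMap_induction_smulRight [Module.Free R M] [Module.Finite R M]
    {motive : (M →ₗ[R] N) → Prop}
    (smulRight : ∀ (ξ : Module.Dual R M) (y : N), motive (ξ.smulRight y))
    (add : ∀ f g, motive f → motive g → motive (f + g)) (f : M →ₗ[R] N) : motive f := by
  obtain ⟨u, rfl⟩ := (dualTensorHomEquiv R M N).surjective f
  induction u with
  | zero => simpa using smulRight 0 0
  | tmul ξ y =>
    convert smulRight ξ y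
    ext x
    simp
  | add u v hu hv => simpa only [map_add] using add _ _ hu hv

variable [Module.Free R M] [Module.Finite R M] [Module.Free R N] [Module.Finite R N]

theorem trace_compRight_comp_lcomp (f : M →ₗ[R] M) (g : N →ₗ[R] N) :
    trace R (M →ₗ[R] N) (compRight R g ∘ₗ lcomp R N f) = trace R M f * trace R N g := by
  induction f using linearMap_induction_smulRight with
  | add f₁ f₂ h₁ h₂ =>
    have lcomp_add : lcomp R N (f₁ + f₂) = lcomp R N f₁ + lcomp R N f₂ := by ext; simp
    rw [lcomp_add, comp_add, map_add, h₁, h₂, map_add, add_mul]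
  | smulRight ξ x =>
  induction g using linearMap_induction_smulRight with
  | add g₁ g₂ h₁ h₂ =>
    have compRight_add : (compRight R (g₁ + g₂) : (M →ₗ[R] N) →ₗ[R] M →ₗ[R] N) =
        compRight R g₁ + compRight R g₂ := by ext; simp
    rw [compRight_add, add_comp, map_add, h₁, h₂, map_add, mul_add]
  | smulRight η y =>
  have rank_one : compRight R (η.smulRight y) ∘ₗ lcomp R N (ξ.smulRight x) =
      (η ∘ₗ applyₗ x).smulRight (ξ.smulRight y) := by
    ext h z
    simp [smul_smul, mul_comm]
  rw [rank_one]
  simp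

theorem trace_compRight (g : N →ₗ[R] N) :
    trace R (M →ₗ[R] N) (compRight R g) = Module.finrank R M * trace R N g := by
  rw [← trace_id, ← trace_compRight_comp_lcomp]
  rfl

theorem trace_lcomp (f : M →ₗ[R] M) :
    trace R (M →ₗ[R] N) (lcomp R N f) = Module.finrank R N * trace R M f := by
  rw [← trace_id, mul_comm, ← trace_compRight_comp_lcomp]
  rfl

end TraceHom

theorem isPerfPair_of_nondegenerate {K V W : Type*} [Field K] [AddCommGroup V] [Module K V]
    [FiniteDimensional K V] [AddCommGroup W] [Module K W] {B : V →ₗ[K] W →ₗ[K] K}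
    (hB : B.Nondegenerate) : B.IsPerfPair :=
  .of_injective (LinearMap.ker_eq_bot.1 (LinearMap.separatingLeft_iff_ker_eq_bot.1 hB.1))
    (LinearMap.ker_eq_bot.1 (LinearMap.separatingRight_iff_flip_ker_eq_bot.1 hB.2))

section Adjoint

open LinearMap

variable {R P Q : Type*} [CommRing R] [AddCommGroup P] [Module R P] [AddCommGroup Q] [Module R Q]
  (φ : P →ₗ[R] P →ₗ[R] R) (ψ : Q →ₗ[R] Q →ₗ[R] R) [φ.IsPerfPair]

/-- The adjoint `s ↦ s*` with respect to the forms `φ` and `ψ`, as a linear map: `s* y` is the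
vector that represents the functional `x ↦ ψ (s x) y` through the second argument of `φ`. -/
noncomputable def adjointHom : (P →ₗ[R] Q) →ₗ[R] Q →ₗ[R] P :=
  compRight R φ.flip.toPerfPair.symm.toLinearMap ∘ₗ lcomp R _ ψ.flip ∘ₗ Module.Dual.transpose

theorem isAdjointPair_adjointHom (s : P →ₗ[R] Q) : IsAdjointPair φ ψ s (adjointHom φ ψ s) :=
  fun x y ↦ (φ.apply_toPerfPair_flip (Module.Dual.transpose s (ψ.flip y)) x).symm

variable {φ ψ} in
theorem eq_adjointHom_of_isAdjointPair {s : P →ₗ[R] Q} {s' : Q →ₗ[R] P}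
    (h : IsAdjointPair φ ψ s s') : s' = adjointHom φ ψ s := by
  ext y
  refine φ.flip.toPerfPair.injective (LinearMap.ext fun x ↦ ?_)
  exact (h x y).symm.trans (isAdjointPair_adjointHom φ ψ s x y)

theorem adjointHom_smulRight_apply (ξ : Module.Dual R P) (y z : Q) :
    adjointHom φ ψ (ξ.smulRight y) z = ψ y z • φ.flip.toPerfPair.symm ξ := by
  refine φ.flip.toPerfPair.injective (LinearMap.ext fun x ↦ ?_)
  have h := isAdjointPair_adjointHom φ ψ (ξ.smulRight y) x z
  simp [← h, mul_comm]

variable {φ} in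
theorem dual_apply_flip_toPerfPair_symm_comm (hφ : φ.IsSymm) (ξ η : Module.Dual R P) :
    ξ (φ.flip.toPerfPair.symm η) = η (φ.flip.toPerfPair.symm ξ) := by
  rw [← φ.apply_toPerfPair_flip ξ, ← φ.apply_toPerfPair_flip η]
  exact hφ.eq _ _

variable [Module.Free R P] [Module.Finite R P]

theorem trace_adjointHom_smulRight_comp_smulRight (ξ η : Module.Dual R P) (y z : Q) :
    trace R P (adjointHom φ ψ (ξ.smulRight y) ∘ₗ η.smulRight z) =
      ψ y z * η (φ.flip.toPerfPair.symm ξ) := by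
  have rank_one : adjointHom φ ψ (ξ.smulRight y) ∘ₗ η.smulRight z =
      η.smulRight (adjointHom φ ψ (ξ.smulRight y) z) := by
    ext x
    simp
  rw [rank_one, trace_smulRight, adjointHom_smulRight_apply, map_smul, smul_eq_mul]

variable {φ ψ}

theorem trace_adjointHom_comp_comm (hφ : φ.IsSymm) (hψ : ψ.IsSymm) (s t : P →ₗ[R] Q) :
    trace R P (adjointHom φ ψ s ∘ₗ t) = trace R P (adjointHom φ ψ t ∘ₗ s) := by
  induction s using linearMap_induction_smulRight with
  | add s₁ s₂ h₁ h₂ => simp only [map_add, add_comp, comp_add, h₁, h₂]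
  | smulRight ξ y =>
  induction t using linearMap_induction_smulRight with
  | add t₁ t₂ h₁ h₂ => simp only [map_add, add_comp, comp_add, h₁, h₂]
  | smulRight η z =>
  rw [trace_adjointHom_smulRight_comp_smulRight, trace_adjointHom_smulRight_comp_smulRight,
    dual_apply_flip_toPerfPair_symm_comm hφ, ← hψ.eq y z, RingHom.id_apply]

variable [Module.Free R Q] [Module.Finite R Q]

variable (ψ) in
theorem trace_compRight_comp_lcomp_comp_adjointHom (hφ : φ.IsSymm) (a b : P →ₗ[R] Q) :
    trace R (P →ₗ[R] Q) (compRight R a ∘ₗ lcomp R P b ∘ₗ adjointHom φ ψ) =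
      trace R P (adjointHom φ ψ a ∘ₗ b) := by
  induction a using linearMap_induction_smulRight with
  | add a₁ a₂ h₁ h₂ =>
    have compRight_add : (compRight R (a₁ + a₂) : (P →ₗ[R] P) →ₗ[R] P →ₗ[R] Q) =
        compRight R a₁ + compRight R a₂ := by ext; simp
    rw [compRight_add, add_comp, map_add, h₁, h₂, map_add, add_comp, map_add]
  | smulRight ξ y =>
  induction b using linearMap_induction_smulRight with
  | add b₁ b₂ h₁ h₂ =>
    have lcomp_add : lcomp R P (b₁ + b₂) = lcomp R P b₁ + lcomp R P b₂ := by ext; simp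
    rw [lcomp_add, add_comp, comp_add, map_add, h₁, h₂, comp_add, map_add]
  | smulRight η z =>
  have rank_one : compRight R (ξ.smulRight y) ∘ₗ lcomp R P (η.smulRight z) ∘ₗ adjointHom φ ψ =
      (ξ ∘ₗ applyₗ z ∘ₗ adjointHom φ ψ).smulRight (η.smulRight y) := by
    ext h x
    simp [smul_smul, mul_comm]
  calc trace R (P →ₗ[R] Q) _
    _ = ξ (adjointHom φ ψ (η.smulRight y) z) := by rw [rank_one, trace_smulRight]; rfl
    _ = ψ y z * η (φ.flip.toPerfPair.symm ξ) := by
      rw [adjointHom_smulRight_apply, map_smul, smul_eq_mul,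
        dual_apply_flip_toPerfPair_symm_comm hφ]
    _ = _ := (trace_adjointHom_smulRight_comp_smulRight φ ψ ξ η y z).symm

end Adjoint

section Curvature

open LinearMap

variable {R P Q : Type*} [CommRing R] [AddCommGroup P] [Module R P] [AddCommGroup Q] [Module R Q]
  (φ : P →ₗ[R] P →ₗ[R] R) (ψ : Q →ₗ[R] Q →ₗ[R] R) [φ.IsPerfPair]

/-- The curvature `R(t₁, t₂)t` of the Grassmannian as an endomorphism in the variable `t₂`, which
is the endomorphism whose trace is the Ricci form at `(t₁, t)`. -/
noncomputable def curvatureEnd (t t₁ : P →ₗ[R] Q) : (P →ₗ[R] Q) →ₗ[R] P →ₗ[R] Q :=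
  compRight R (t ∘ₗ adjointHom φ ψ t₁) + lcomp R Q (adjointHom φ ψ t₁ ∘ₗ t)
    - compRight R t ∘ₗ lcomp R P t₁ ∘ₗ adjointHom φ ψ
    - compRight R t₁ ∘ₗ lcomp R P t ∘ₗ adjointHom φ ψ

theorem curvatureEnd_apply (t t₁ t₂ : P →ₗ[R] Q) :
    curvatureEnd φ ψ t t₁ t₂ =
      t ∘ₗ adjointHom φ ψ t₁ ∘ₗ t₂ + t₂ ∘ₗ adjointHom φ ψ t₁ ∘ₗ t
        - t ∘ₗ adjointHom φ ψ t₂ ∘ₗ t₁ - t₁ ∘ₗ adjointHom φ ψ t₂ ∘ₗ t :=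
  rfl

variable [Module.Free R P] [Module.Finite R P] [Module.Free R Q] [Module.Finite R Q]

variable {φ ψ}

theorem trace_curvatureEnd (hφ : φ.IsSymm) (hψ : ψ.IsSymm) (t t₁ : P →ₗ[R] Q) :
    trace R (P →ₗ[R] Q) (curvatureEnd φ ψ t t₁) =
      (Module.finrank R P + Module.finrank R Q - 2) * trace R P (adjointHom φ ψ t₁ ∘ₗ t) := by
  simp only [curvatureEnd, map_add, map_sub]
  rw [trace_compRight, trace_lcomp, trace_compRight_comp_lcomp_comp_adjointHom ψ hφ,
    trace_compRight_comp_lcomp_comp_adjointHom ψ hφ, trace_adjointHom_comp_comm hφ hψ t t₁,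
    ← trace_comp_comm' t]
  ring

theorem statement15_general (hφ : φ.IsSymm) (hψ : ψ.IsSymm)
    (adj : (P →ₗ[R] Q) → (Q →ₗ[R] P)) (hadj : ∀ s : P →ₗ[R] Q, IsAdjointPair φ ψ s (adj s))
    (t t₁ : P →ₗ[R] Q) :
    ∃ F : (P →ₗ[R] Q) →ₗ[R] (P →ₗ[R] Q),
      (∀ t₂ : P →ₗ[R] Q,
        F t₂ = t ∘ₗ adj t₁ ∘ₗ t₂ + t₂ ∘ₗ adj t₁ ∘ₗ t - t ∘ₗ adj t₂ ∘ₗ t₁ - t₁ ∘ₗ adj t₂ ∘ₗ t) ∧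
      trace R (P →ₗ[R] Q) F =
        (Module.finrank R P + Module.finrank R Q - 2) * trace R P (adj t₁ ∘ₗ t) := by
  obtain rfl : adj = adjointHom φ ψ := funext fun s ↦ eq_adjointHom_of_isAdjointPair (hadj s)
  exact ⟨curvatureEnd φ ψ t t₁, curvatureEnd_apply φ ψ t t₁, trace_curvatureEnd hφ hψ t t₁⟩

end Curvature

/-- (`Gr⁰_ℝ(k,V)` is Einstein with constant `n − 2`.) Let `p` and `q` be
finite-dimensional real vector spaces with nondegenerate symmetric bilinear forms,
`dim p = k`, `dim q = n − k` (so `n = dim p + dim q`). For all linear maps `t, t₁ : p → q`,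
the trace of the linear endomorphism of `Hom(p,q)` given by
`t₂ ↦ t∘t₁*∘t₂ + t₂∘t₁*∘t − t∘t₂*∘t₁ − t₁∘t₂*∘t` equals `(n − 2)·tr(t₁*∘t)`. -/
theorem statement15 {P Q : Type*}
    [AddCommGroup P] [Module ℝ P] [FiniteDimensional ℝ P]
    [AddCommGroup Q] [Module ℝ Q] [FiniteDimensional ℝ Q]
    (φp : P →ₗ[ℝ] P →ₗ[ℝ] ℝ) (φq : Q →ₗ[ℝ] Q →ₗ[ℝ] ℝ)
    (hpsym : ∀ x y : P, φp x y = φp y x) (hqsym : ∀ x y : Q, φq x y = φq y x)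
    (hpnd : ∀ x : P, (∀ y : P, φp x y = 0) → x = 0)
    (hqnd : ∀ x : Q, (∀ y : Q, φq x y = 0) → x = 0)
    (k n : ℕ) (hk : Module.finrank ℝ P = k)
    (hn : Module.finrank ℝ P + Module.finrank ℝ Q = n)
    -- `adj s` is the adjoint `s*` of `s : P → Q` with respect to the two forms
    (adj : (P →ₗ[ℝ] Q) → (Q →ₗ[ℝ] P))
    (hadj : ∀ (s : P →ₗ[ℝ] Q) (x : P) (y : Q), φq (s x) y = φp x (adj s y))
    (t t₁ : P →ₗ[ℝ] Q) :
    ∃ F : (P →ₗ[ℝ] Q) →ₗ[ℝ] (P →ₗ[ℝ] Q),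
      (∀ t₂ : P →ₗ[ℝ] Q,
        F t₂ = t ∘ₗ adj t₁ ∘ₗ t₂ + t₂ ∘ₗ adj t₁ ∘ₗ t - t ∘ₗ adj t₂ ∘ₗ t₁ - t₁ ∘ₗ adj t₂ ∘ₗ t) ∧
      LinearMap.trace ℝ (P →ₗ[ℝ] Q) F = ((n : ℝ) - 2) * LinearMap.trace ℝ P (adj t₁ ∘ₗ t) := by
  have hφ : φp.IsSymm := ⟨hpsym⟩
  have : φp.IsPerfPair :=
    isPerfPair_of_nondegenerate (hφ.isRefl.nondegenerate_iff_separatingLeft.2 hpnd)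
  simpa [← hn] using statement15_general hφ ⟨hqsym⟩ adj hadj t t₁
end

section
/- Let p and q be finite-dimensional real vector spaces with nondegenerate symmetric bilinear forms. For all linear maps t, t₁ : p → q, the trace of the linear endomorphism of Hom(p,q) given by t₂ ↦ t∘t₂*∘t₁ equals tr(t*∘t₁). -/
/-!
Under `Hom(p, q) ≅ p* ⊗ q`, an endomorphism `s ↦ g ∘ sᵀ ∘ h` with `g : p* → q` and `h : p → q*`
becomes `f ⊗ y ↦ hᵀ y ⊗ g f`, that is, a map `g ⊗ hᵀ` followed by the interchange of the two tensor
factors. The trace of such a twisted tensor product is the trace of the composite `hᵀ ∘ g`.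
The forms turn `s*` into `sᵀ`, and for `t₂ ↦ t ∘ t₂* ∘ t₁` the composite `hᵀ ∘ g` is the transpose
of `t* ∘ t₁`.
-/

open Module LinearMap
open scoped TensorProduct

theorem trace_comm_comp_map {R M N : Type*} [CommRing R]
    [AddCommGroup M] [Module R M] [Module.Free R M] [Module.Finite R M]
    [AddCommGroup N] [Module R N] [Module.Free R N] [Module.Finite R N]
    (a : M →ₗ[R] N) (b : N →ₗ[R] M) :
    trace R (M ⊗[R] N) (TensorProduct.comm R N M ∘ₗ TensorProduct.map a b) =
      trace R M (b ∘ₗ a) := by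
  let v := Free.chooseBasis R M
  let w := Free.chooseBasis R N
  have diag_entry (i j) :
      toMatrix (v.tensorProduct w) (v.tensorProduct w)
          (TensorProduct.comm R N M ∘ₗ TensorProduct.map a b) (i, j) (i, j) =
        toMatrix w v b i j * toMatrix v w a j i := by
    simp [toMatrix_apply, mul_comm]
  rw [trace_eq_matrix_trace R (v.tensorProduct w), trace_eq_matrix_trace R v,
    toMatrix_comp v w v b a]
  simp only [Matrix.trace, Matrix.diag_apply, Matrix.mul_apply, Fintype.sum_prod_type, diag_entry]

section TransposeSandwich

variable {R P Q : Type*} [CommRing R] [AddCommGroup P] [Module R P] [AddCommGroup Q] [Module R Q]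

/-- The endomorphism `s ↦ g ∘ sᵀ ∘ h` of `Hom(P, Q)`, where `sᵀ : Q* → P*` is the transpose of `s`.
It is the form of `t₂ ↦ t ∘ t₂* ∘ t₁` that does not refer to bilinear forms. -/
def transposeSandwich (g : Dual R P →ₗ[R] Q) (h : P →ₗ[R] Dual R Q) : Module.End R (P →ₗ[R] Q) :=
  lcomp R Q h ∘ₗ llcomp R (Dual R Q) (Dual R P) Q g ∘ₗ Dual.transpose

theorem transposeSandwich_apply (g : Dual R P →ₗ[R] Q) (h : P →ₗ[R] Dual R Q) (s : P →ₗ[R] Q) :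
    transposeSandwich g h s = g ∘ₗ s.dualMap ∘ₗ h :=
  rfl

theorem transposeSandwich_comp_dualTensorHom (g : Dual R P →ₗ[R] Q) (h : P →ₗ[R] Dual R Q) :
    transposeSandwich g h ∘ₗ dualTensorHom R P Q =
      dualTensorHom R P Q ∘ₗ TensorProduct.comm R Q (Dual R P) ∘ₗ TensorProduct.map g h.flip := by
  ext f y x
  have transpose_apply : (dualTensorHom R P Q (f ⊗ₜ y)).dualMap (h x) = h x y • f := by
    ext z
    simp [mul_comm]
  simp [transposeSandwich_apply, transpose_apply]

theorem trace_transposeSandwich [Module.Free R P] [Module.Finite R P] [Module.Free R Q]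
    [Module.Finite R Q] (g : Dual R P →ₗ[R] Q) (h : P →ₗ[R] Dual R Q) :
    trace R (P →ₗ[R] Q) (transposeSandwich g h) = trace R (Dual R P) (h.flip ∘ₗ g) := by
  let e := dualTensorHomEquiv R P Q
  have conj_eq : e.conj (TensorProduct.comm R Q (Dual R P) ∘ₗ TensorProduct.map g h.flip) =
      transposeSandwich g h := by
    rw [LinearEquiv.conj_apply, LinearEquiv.comp_toLinearMap_symm_eq]
    exact (transposeSandwich_comp_dualTensorHom g h).symm
  rw [← conj_eq, trace_conj' (M := Dual R P ⊗[R] Q)]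
  exact trace_comm_comp_map g h.flip

end TransposeSandwich

theorem adjoint_eq_toPerfPair_symm_comp {R P Q : Type*} [CommRing R] [AddCommGroup P] [Module R P]
    [AddCommGroup Q] [Module R Q] {B : P →ₗ[R] P →ₗ[R] R} [B.IsPerfPair] {C : Q →ₗ[R] Q →ₗ[R] R}
    {s : P →ₗ[R] Q} {s' : Q →ₗ[R] P} (hs : IsAdjointPair B C s s') :
    s' = B.flip.toPerfPair.symm ∘ₗ s.dualMap ∘ₗ C.flip := by
  have flip_apply_adjoint (y : Q) : B.flip.toPerfPair (s' y) = s.dualMap (C.flip y) := by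
    ext x
    exact (hs x y).symm
  ext y
  exact B.flip.toPerfPair.eq_symm_apply.mpr (flip_apply_adjoint y)

theorem isPerfPair_of_isSymm_of_separatingLeft {K V : Type*} [Field K] [AddCommGroup V]
    [Module K V] [FiniteDimensional K V] {B : V →ₗ[K] V →ₗ[K] K} (hsymm : B.IsSymm)
    (hsep : B.SeparatingLeft) : B.IsPerfPair := by
  have hinj : Function.Injective B := ker_eq_bot.mp (separatingLeft_iff_ker_eq_bot.mp hsep)
  exact .of_injective hinj (isSymm_iff_eq_flip.mp hsymm ▸ hinj)

/-- Without symmetry `t` has two adjoints: `adj t`, with `C (t x) y = B x (adj t y)`, and `t'`, with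
`C (t x) y = B (t' y) x`. The trace involves the second one. -/
theorem statement17_general {R P Q : Type*} [CommRing R]
    [AddCommGroup P] [Module R P] [Module.Free R P] [Module.Finite R P]
    [AddCommGroup Q] [Module R Q] [Module.Free R Q] [Module.Finite R Q]
    (B : P →ₗ[R] P →ₗ[R] R) [B.IsPerfPair] (C : Q →ₗ[R] Q →ₗ[R] R)
    (adj : (P →ₗ[R] Q) → (Q →ₗ[R] P)) (hadj : ∀ s : P →ₗ[R] Q, IsAdjointPair B C s (adj s))
    (t t₁ : P →ₗ[R] Q) (t' : Q →ₗ[R] P) (ht' : IsAdjointPair B.flip C t t') :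
    ∃ F : Module.End R (P →ₗ[R] Q),
      (∀ t₂, F t₂ = t ∘ₗ adj t₂ ∘ₗ t₁) ∧ trace R (P →ₗ[R] Q) F = trace R P (t' ∘ₗ t₁) := by
  let g : Dual R P →ₗ[R] Q := t ∘ₗ B.flip.toPerfPair.symm
  let h : P →ₗ[R] Dual R Q := C.flip ∘ₗ t₁
  have flip_comp_eq : h.flip ∘ₗ g = (t' ∘ₗ t₁).dualMap := calc
    h.flip ∘ₗ g = t₁.dualMap ∘ₗ (C ∘ₗ t) ∘ₗ B.flip.toPerfPair.symm := rfl
    _ = t₁.dualMap ∘ₗ B.flip.compl₂ t' ∘ₗ B.flip.toPerfPair.symm := by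
      rw [isAdjointPair_iff_comp_eq_compl₂.mp ht']
    _ = (t' ∘ₗ t₁).dualMap := by
      ext f x
      simp
  refine ⟨transposeSandwich g h, fun t₂ ↦ ?_, ?_⟩
  · rw [adjoint_eq_toPerfPair_symm_comp (hadj t₂)]
    rfl
  · rw [trace_transposeSandwich, flip_comp_eq, dualMap_def, trace_transpose']

/-- for finite-dimensional real vector spaces `p, q` with nondegenerate
symmetric bilinear forms and linear maps `t, t₁ : p → q`, the trace of the linear
endomorphism of `Hom(p,q)` given by `t₂ ↦ t∘t₂*∘t₁` equals `tr(t*∘t₁)`. -/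
theorem statement17 {P Q : Type*}
    [AddCommGroup P] [Module ℝ P] [FiniteDimensional ℝ P]
    [AddCommGroup Q] [Module ℝ Q] [FiniteDimensional ℝ Q]
    (φp : P →ₗ[ℝ] P →ₗ[ℝ] ℝ) (φq : Q →ₗ[ℝ] Q →ₗ[ℝ] ℝ)
    (hpsym : ∀ x y : P, φp x y = φp y x) (hqsym : ∀ x y : Q, φq x y = φq y x)
    (hpnd : ∀ x : P, (∀ y : P, φp x y = 0) → x = 0)
    (hqnd : ∀ x : Q, (∀ y : Q, φq x y = 0) → x = 0)
    -- `adj s` is the adjoint `s*` of `s : P → Q` with respect to the two forms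
    (adj : (P →ₗ[ℝ] Q) → (Q →ₗ[ℝ] P))
    (hadj : ∀ (s : P →ₗ[ℝ] Q) (x : P) (y : Q), φq (s x) y = φp x (adj s y))
    (t t₁ : P →ₗ[ℝ] Q) :
    ∃ F : (P →ₗ[ℝ] Q) →ₗ[ℝ] (P →ₗ[ℝ] Q),
      (∀ t₂ : P →ₗ[ℝ] Q, F t₂ = t ∘ₗ adj t₂ ∘ₗ t₁) ∧
      LinearMap.trace ℝ (P →ₗ[ℝ] Q) F = LinearMap.trace ℝ P (adj t ∘ₗ t₁) := by
  have := isPerfPair_of_isSymm_of_separatingLeft ⟨hpsym⟩ hpnd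
  exact statement17_general φp φq adj hadj t t₁ (adj t) fun x y ↦ (hadj t x y).trans (hpsym _ _)
end
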